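/- Let n be a positive integer with n ≡ 3 (mod 4) and let M = (n-1)/2 or M = n-1. Then, modulo [n]*Phi_n(q)^4, sum_{k=0}^{M} (-1)^k [4k+1] ((q;q^2)_k^4 (q^2;q^4)_k / ((q^2;q^2)_k^4 (q^4;q^4)_k)) q^k ≡ - [n]^3 * (q^{1-n} / (1+q)^2) * ((q^4;q^4)_{(n-3)/4}^2 / (q^6;q^4)_{(n-3)/4}^2). -/

import Mathlib

open Finset

/-- The generator `q` of the field `ℚ(q)` of rational functions. -/
noncomputable def q : RatFunc ℚ := RatFunc.X

/-- The `q`-integer `[r] = (1 - q^r)/(1 - q)`. -/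
noncomputable def qint (r : ℤ) : RatFunc ℚ := (1 - q ^ r) / (1 - q)

/-- The `q`-shifted factorial `(x; b)_m = (1-x)(1-xb)⋯(1-x b^(m-1))`. -/
noncomputable def qpoch (x b : RatFunc ℚ) (m : ℕ) : RatFunc ℚ :=
  ∏ i ∈ Finset.range m, (1 - x * b ^ i)

/-- `f ≡ g (mod P)`: `f - g = P * (r/s)` with `s` coprime to `P`. -/
def qcong (f g : RatFunc ℚ) (P : Polynomial ℚ) : Prop :=
  ∃ r s : Polynomial ℚ, IsCoprime s P ∧
    f - g = algebraMap (Polynomial ℚ) (RatFunc ℚ) P *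
      (algebraMap (Polynomial ℚ) (RatFunc ℚ) r / algebraMap (Polynomial ℚ) (RatFunc ℚ) s)


section Generic
variable {K : Type*} [Field K]

noncomputable def hh (p : K) (k : ℕ) : K := ∏ i ∈ range k, (1 - p ^ (4 * i + 2)) / (1 - p ^ (4 * i + 4))

noncomputable def cc (p : K) (k : ℕ) : K := (-p) ^ k * hh p k

noncomputable def gg (p x : K) (k : ℕ) : K :=
  ∏ i ∈ range k, ((1 - x * p ^ (2 * i + 1)) * (1 - x⁻¹ * p ^ (2 * i + 1))) /
    ((1 - x * p ^ (2 * i + 2)) * (1 - x⁻¹ * p ^ (2 * i + 2)))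

noncomputable def SS (p x y : K) (N : ℕ) : K :=
  ∑ k ∈ range (N + 1), cc p k * (1 - p ^ (4 * k + 1)) * gg p y k * gg p x k

lemma gg_inv (p x : K) (k : ℕ) : gg p x⁻¹ k = gg p x k := by
  unfold gg
  refine prod_congr rfl fun i _ => ?_
  rw [inv_inv, mul_comm (1 - x⁻¹ * _), mul_comm (1 - x⁻¹ * _)]

lemma SS_symm (p x y : K) (N : ℕ) : SS p x y N = SS p y x N := by
  unfold SS
  refine sum_congr rfl fun i _ => ?_
  ring

lemma gg_shift (p x : K) (hp : p ≠ 0) (hx : x ≠ 0) (h1 : ∀ i : ℕ, 1 - x * p ^ (2 * i) ≠ 0)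
    (h2 : ∀ i : ℕ, 1 - x⁻¹ * p ^ (2 * i) ≠ 0) (J : ℕ) :
    gg p (x * p ^ 2) (J + 1) = gg p x J * ((1 - x * p ^ 2) / (p * (1 - x)) *
      ((1 - x * p ^ (2 * J + 1)) * (1 - x * p ^ (2 * J + 3)) /
        ((1 - x * p ^ (2 * J + 2)) * (1 - x * p ^ (2 * J + 4))))) := by
  induction J with
  | zero =>
    have a0 := h1 0
    have a1 := h1 1
    have a2 := h1 2
    have b0 := h2 0
    simp only [mul_zero, pow_zero, mul_one, Nat.reduceMul] at a0 a1 a2 b0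
    have b0' : x - 1 ≠ 0 := by intro h; apply a0; linear_combination -h
    have e1 : 1 - (x * p ^ 2)⁻¹ * p ^ 1 = (x * p - 1) / (x * p) := by field_simp
    have e2 : 1 - (x * p ^ 2)⁻¹ * p ^ 2 = (x - 1) / x := by field_simp
    simp only [gg, prod_range_succ, prod_range_zero, mul_zero, zero_add, e1, e2]
    have a2' : 1 - x * p ^ 2 * p ^ 2 ≠ 0 := by convert a2 using 2; ring
    field_simp
    ring
  | succ J ih =>
    have g1 : gg p (x * p ^ 2) (J + 1 + 1) = gg p (x * p ^ 2) (J + 1) * (((1 - x * p^2 * p ^ (2 * (J+1) + 1)) * (1 - (x*p^2)⁻¹ * p ^ (2 * (J+1) + 1))) /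
    ((1 - x *p^2* p ^ (2 * (J+1) + 2)) * (1 - (x*p^2)⁻¹ * p ^ (2 * (J+1) + 2)))) := prod_range_succ _ _
    have g2 : gg p x (J + 1) = gg p x J * (((1 - x * p ^ (2 * J + 1)) * (1 - x⁻¹ * p ^ (2 * J + 1))) /
    ((1 - x * p ^ (2 * J + 2)) * (1 - x⁻¹ * p ^ (2 * J + 2)))) := prod_range_succ _ _
    rw [g1, g2, ih]
    have a0 := h1 0
    have a1 := h1 (J+1)
    have a2 := h1 (J+2)
    have a3 := h1 (J+3)
    have b1 := h2 (J+1)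
    have e1 : (x * p ^ 2)⁻¹ * p ^ (2 * (J+1) + 1) = x⁻¹ * p ^ (2 * J + 1) := by
      rw [show 2 * (J+1) + 1 = 2 * J + 1 + 2 by ring, pow_add _ _ 2]; field_simp; try ring
    have e2 : (x * p ^ 2)⁻¹ * p ^ (2 * (J+1) + 2) = x⁻¹ * p ^ (2 * J + 2) := by
      rw [show 2 * (J+1) + 2 = 2 * J + 2 + 2 by ring, pow_add _ _ 2]; field_simp; try ring
    have e3 : x * p ^ 2 * p ^ (2 * (J+1) + 1) = x * p ^ (2 * J + 5) := by ring
    have e4 : x * p ^ 2 * p ^ (2 * (J+1) + 2) = x * p ^ (2 * J + 6) := by ring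
    rw [e1, e2, e3, e4]
    rw [show 2 * (J + 1) + 1 = 2 * J + 3 by ring, show 2 * (J + 1) + 2 = 2 * J + 4 by ring,
      show 2 * (J + 1) + 3 = 2 * J + 5 by ring, show 2 * (J + 1) + 4 = 2 * J + 6 by ring]
    rw [show 2 * (J + 1) = 2 * J + 2 by ring] at a1 b1
    rw [show 2 * (J + 2) = 2 * J + 4 by ring] at a2
    rw [show 2 * (J + 3) = 2 * J + 6 by ring] at a3
    simp only [mul_zero, pow_zero, mul_one] at a0
    generalize (1 - x⁻¹ * p ^ (2 * J + 1)) = B1 at *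
    generalize (1 - x⁻¹ * p ^ (2 * J + 2)) = B2 at *
    generalize (1 - x * p ^ (2 * J + 1)) = B3 at *
    generalize (1 - x * p ^ (2 * J + 2)) = B4 at *
    generalize (1 - x * p ^ (2 * J + 3)) = B5 at *
    generalize (1 - x * p ^ (2 * J + 4)) = B6 at *
    generalize (1 - x * p ^ (2 * J + 5)) = B7 at *
    generalize (1 - x * p ^ (2 * J + 6)) = B8 at *
    field_simp

lemma wz_core (p x w P : K) :
  -(1-p^5*P^2)*((1-p*x*w+p^2*x^2)*(1-x*p*P)*(1-x*p^3*P)*(x-p^2*P)*(x-p^4*P)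
   - (x^2-p*x*w+p^2)*(x-p*P)*(x-p^3*P)*(1-x*p^2*P)*(1-x*p^4*P)) =
  (1-p)*(1+x)*(1-x)*(-p*(1-x*p*P)*(x-p*P)*x*(1-p^6*P^2)*(1-p^3*P*w+p^6*P^2)
   - (1-p^4*P^2)*(1-p^2*P*w+p^4*P^2)*(1-x*p^4*P)*(x-p^4*P)*x) := by ring

lemma wz_abs (p x a b c Y1 Y2 Y3 A B d u s X1 X2 X3 X4 Z1 Z2 Z3 Z4 : K) (hp : p ≠ 0) (hx : x ≠ 0)
   (h1 : 1 - x ≠ 0) (hb : b ≠ 0) (hY2 : Y2 ≠ 0) (hX2 : X2 ≠ 0) (hX4 : X4 ≠ 0) (hZ2 : Z2 ≠ 0)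
   (hZ4 : Z4 ≠ 0)
   (core : -c*(A*X1*X3*Z2*Z4-B*Z1*Z3*X2*X4) = (1-p)*(1+x)*(1-x)*(-p*X1*Z1*x*d*Y3 - b*Y2*X4*Z4*x)) :
   (-p) * (a / b) * c * (Y1/Y2) * (A * s * (u / (p * (1 - x)) * (X1*X3/(X2*X4)))
     + B * u * ((s/x)/(p * ((x-1)/x)) * (((Z1/x) * (Z3/x)) / ((Z2/x) * (Z4/x))))) =
   (1-p)*(1+x)*u*s*((-p) * (a/b) * (Y1/Y2) * (X1 * (Z1/x) / (X2 * (Z2/x))) * d * Y3 / (X4 * (Z4/x))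
     - a * Y1 / (X2*(Z2/x))) := by
  have h1' : x - 1 ≠ 0 := by intro h; apply h1; linear_combination -h
  have e1 : (s/x)/(p * ((x-1)/x)) * (((Z1/x) * (Z3/x)) / ((Z2/x) * (Z4/x))) = - (s / (p*(1-x)) * ((Z1 * Z3)/(Z2 * Z4))) := by
    rw [show x - 1 = -(1-x) by ring]
    field_simp
  rw [e1]
  have l : (-p) * (a / b) * c * (Y1/Y2) * (A * s * (u / (p * (1 - x)) * (X1*X3/(X2*X4)))
     + B * u * (- (s / (p*(1-x)) * ((Z1 * Z3)/(Z2 * Z4))))) =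
     (a*Y1*u*s/(b*Y2*(1-x)*X2*X4*Z2*Z4)) * (-c*(A*X1*X3*Z2*Z4-B*Z1*Z3*X2*X4)) := by
     field_simp
     ring
  rw [l, core]
  field_simp

lemma wz_alg (p x y P : K) (hp : p ≠ 0) (hx : x ≠ 0) (hy : y ≠ 0) 
    (n1 : 1 - x ≠ 0) (n2 : 1 - x * p ^ 2 * P ≠ 0) (n3 : 1 - x * p ^ 4 * P ≠ 0)
    (n4 : 1 - x⁻¹ * p ^ 2 * P ≠ 0) (n5 : 1 - x⁻¹ * p ^ 4 * P ≠ 0) (n6 : 1 - y * p ^ 2 * P ≠ 0)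
    (n7 : 1 - y⁻¹ * p ^ 2 * P ≠ 0) (n8 : 1 - p ^ 4 * P ^ 2 ≠ 0) :
    (-p) * ((1 - p^2*P^2) / (1 - p^4*P^2)) * (1 - p^5*P^2) *
      ((1 - y * p * P) * (1 - y⁻¹ * p * P) / ((1 - y * p^2 * P) * (1 - y⁻¹ * p^2 * P))) *
      ((1 - p*x*y⁻¹) * (1-p*x*y) * (x-p^2) * ((1 - x * p ^ 2) / (p * (1 - x)) *
      ((1 - x * p * P) * (1 - x * p^3*P) / ((1 - x * p^2*P) * (1 - x * p^4*P))))
      + (x - p*y)*(x-p*y⁻¹)*(1-x*p^2) * ((1 - x⁻¹ * p ^ 2) / (p * (1 - x⁻¹)) *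
      ((1 - x⁻¹ * p * P) * (1 - x⁻¹ * p^3*P) / ((1 - x⁻¹ * p^2*P) * (1 - x⁻¹ * p^4*P)))))
    = (1-p)*(1+x)*(1-x*p^2)*(x-p^2) * (
      (-p) * ((1 - p^2*P^2) / (1 - p^4*P^2)) *
      ((1 - y * p * P) * (1 - y⁻¹ * p * P) / ((1 - y * p^2 * P) * (1 - y⁻¹ * p^2 * P))) *
      ((1 - x * p * P) * (1 - x⁻¹ * p * P) / ((1 - x * p^2 * P) * (1 - x⁻¹ * p^2 * P))) *
      (1 - p^6*P^2)*((1-y*p^3*P)*(1-y⁻¹*p^3*P)) / ((1-x*p^4*P)*(1-x⁻¹*p^4*P))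
      - (1 - p^2*P^2)*((1-y*p*P)*(1-y⁻¹*p*P)) / ((1-x*p^2*P)*(1-x⁻¹*p^2*P))) := by
  have i1 : ∀ a : K, 1 - x⁻¹ * a * P = (x - a * P)/x := by intro a; field_simp
  have i5 : 1 - x⁻¹ = (x - 1) / x := by field_simp
  have i6 : 1 - x⁻¹ * p ^ 2 = (x - p ^ 2) / x := by field_simp
  simp only [i1, i5, i6] at *
  have hyy : y * y⁻¹ = 1 := mul_inv_cancel₀ hy
  refine wz_abs p x (1 - p^2*P^2) (1 - p^4*P^2) (1 - p^5*P^2) _ _ ((1-y*p^3*P)*(1-y⁻¹*p^3*P))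
    ((1 - p*x*y⁻¹) * (1-p*x*y)) ((x - p*y)*(x-p*y⁻¹)) (1 - p^6*P^2) (1-x*p^2) (x-p^2) (1 - x * p * P)
    (1 - x * p^2 * P) (1 - x * p^3 * P) (1 - x * p^4 * P)
    (x - p * P) (x - p^2*P) (x - p^3*P) (x - p^4*P) hp hx n1 n8 (mul_ne_zero n6 n7) n2 n3
     (div_ne_zero_iff.1 n4).1 (div_ne_zero_iff.1 n5).1 ?_
  have := wz_core p x (y + y⁻¹) P
  have f1 : ∀ a : K, (1 - y * a * P) * (1 - y⁻¹ * a * P) = 1 - a * P * (y+y⁻¹) + a^2*P^2 := by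
    intro a; linear_combination (a^2 * P^2) * hyy
  have f2 : (1 - p*x*y⁻¹) * (1-p*x*y) = 1-p*x*(y+y⁻¹)+p^2*x^2 := by
    linear_combination (p^2 * x^2) * hyy
  have f3 : (x - p*y)*(x-p*y⁻¹) = (x^2-p*x*(y+y⁻¹)+p^2) := by
    linear_combination (p^2) * hyy
  rw [f1, f1, f2, f3]
  linear_combination this
end Generic

section Generic
variable {K : Type*} [Field K]

lemma aux_cancel (a u s x Y : K) (hu : u ≠ 0) (hs : s ≠ 0) (hx : x ≠ 0) :
    a * u * s * (Y / (u * (s / x))) = a * x * Y := by field_simp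

lemma aux_step (κ c gy gx e Y1 X2 p h o Yr A B rp rm Xr d Y3 X4 : K)
    (this : -p * h * o * Yr * (A * rp + B * rm) = κ * (-p * h * Yr * Xr * d * Y3 / X4 - e * Y1 / X2)) :
    κ * (c * gy * gx * (e * Y1 / X2)) +
      c * (-p * h) * o * (gy * Yr) * (A * (gx * rp) + B * (gx * rm)) =
    κ * (c * (-p * h) * (gy * Yr) * (gx * Xr) * (d * Y3 / X4)) := by
  have e1 : -p * h * Yr * Xr * d * Y3 / X4 = -p * h * Yr * Xr * (d * Y3 / X4) := by
    rw [mul_assoc _ d Y3, mul_div_assoc]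
  rw [e1] at this
  generalize d * Y3 / X4 = u at *
  generalize e * Y1 / X2 = v at *
  linear_combination (c * gy * gx) * this

lemma wz_zero (p x y : K) (hp : p ≠ 0) (hx : x ≠ 0) (hy : y ≠ 0)
    (hr : ∀ i : ℕ, 0 < i → 1 - p ^ i ≠ 0)
    (h1 : ∀ i : ℕ, 1 - x * p ^ (2 * i) ≠ 0)
    (h2 : ∀ i : ℕ, 1 - x⁻¹ * p ^ (2 * i) ≠ 0)
    (h3 : ∀ i : ℕ, 1 - y * p ^ (2 * i + 2) ≠ 0)
    (h4 : ∀ i : ℕ, 1 - y⁻¹ * p ^ (2 * i + 2) ≠ 0) :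
    ∑ k ∈ range (0 + 1), cc p k * (1 - p ^ (4 * k + 1)) * gg p y k *
      ((1 - p*x*y⁻¹) * (1-p*x*y) * (x-p^2) * gg p (x * p ^ 2) k +
       (x - p*y)*(x-p*y⁻¹)*(1-x*p^2) * gg p (x⁻¹ * p ^ 2) k) =
    (1-p)*(1+x)*(1-x*p^2)*(x-p^2) * (cc p 0 * gg p y 0 * gg p x 0 *
      ((1 - p ^ (4 * 0 + 2)) * ((1 - y * p ^ (2 * 0 + 1)) * (1 - y⁻¹ * p ^ (2 * 0 + 1))) /
       ((1 - x * p ^ (2 * 0 + 2)) * (1 - x⁻¹ * p ^ (2 * 0 + 2))))) := by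
  have a1 := h1 1
  have b1 := h2 1
  simp only [cc, hh, gg, sum_range_succ, sum_range_zero, prod_range_zero, mul_zero, zero_add, pow_zero, mul_one, one_mul, pow_one] at *
  have i6 : 1 - x⁻¹ * p ^ 2 = (x - p ^ 2) / x := by field_simp
  rw [i6] at b1 ⊢
  have b2 := (div_ne_zero_iff.1 b1).1
  have hyy : y * y⁻¹ = 1 := mul_inv_cancel₀ hy
  have : (1 - p) * (1 + x) * (1 - x * p ^ 2) * (x - p ^ 2) *
  ((1 - p ^ 2) * ((1 - y * p) * (1 - y⁻¹ * p)) / ((1 - x * p ^ 2) * ((x - p ^ 2) / x))) = (1 - p) * (1 + x) * x *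
  ((1 - p ^ 2) * ((1 - y * p) * (1 - y⁻¹ * p))) :=
    aux_cancel _ _ _ _ _ a1 b2 hx
  rw [this]
  linear_combination ((1-p) * p^2*x^2*(x-p^2)+(1-p)*p^2*(1-x*p^2) - (1-p)*(1+x)*x*(1-p^2)*p^2) * hyy

lemma wz_step (p x y : K) (hp : p ≠ 0) (hx : x ≠ 0) (hy : y ≠ 0)
    (hr : ∀ i : ℕ, 0 < i → 1 - p ^ i ≠ 0)
    (h1 : ∀ i : ℕ, 1 - x * p ^ (2 * i) ≠ 0)
    (h2 : ∀ i : ℕ, 1 - x⁻¹ * p ^ (2 * i) ≠ 0)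
    (h3 : ∀ i : ℕ, 1 - y * p ^ (2 * i + 2) ≠ 0)
    (h4 : ∀ i : ℕ, 1 - y⁻¹ * p ^ (2 * i + 2) ≠ 0) (J : ℕ) :
    (1-p)*(1+x)*(1-x*p^2)*(x-p^2) * (cc p J * gg p y J * gg p x J *
      ((1 - p ^ (4 * J + 2)) * ((1 - y * p ^ (2 * J + 1)) * (1 - y⁻¹ * p ^ (2 * J + 1))) /
       ((1 - x * p ^ (2 * J + 2)) * (1 - x⁻¹ * p ^ (2 * J + 2))))) +
      cc p (J+1) * (1 - p ^ (4 * (J+1) + 1)) * gg p y (J+1) *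
      ((1 - p*x*y⁻¹) * (1-p*x*y) * (x-p^2) * gg p (x * p ^ 2) (J+1) +
       (x - p*y)*(x-p*y⁻¹)*(1-x*p^2) * gg p (x⁻¹ * p ^ 2) (J+1)) =
    (1-p)*(1+x)*(1-x*p^2)*(x-p^2) * (cc p (J+1) * gg p y (J+1) * gg p x (J+1) *
      ((1 - p ^ (4 * (J+1) + 2)) * ((1 - y * p ^ (2 * (J+1) + 1)) * (1 - y⁻¹ * p ^ (2 * (J+1) + 1))) /
       ((1 - x * p ^ (2 * (J+1) + 2)) * (1 - x⁻¹ * p ^ (2 * (J+1) + 2))))) := by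
  have h1' : ∀ i : ℕ, 1 - (x⁻¹)⁻¹ * p ^ (2 * i) ≠ 0 := by simpa using h1
  rw [gg_shift p x hp hx h1 h2, gg_shift p x⁻¹ hp (inv_ne_zero hx) h2 h1', gg_inv]
  have g1 : ∀ z : K, gg p z (J + 1) = gg p z J * (((1 - z * p ^ (2 * J + 1)) * (1 - z⁻¹ * p ^ (2 * J + 1))) /
  ((1 - z * p ^ (2 * J + 2)) * (1 - z⁻¹ * p ^ (2 * J + 2)))) := fun z => prod_range_succ _ _
  have g2 : cc p (J + 1) = cc p J * ((-p) * ((1 - p ^ (4 * J + 2)) / (1 - p ^ (4 * J + 4)))) := by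
    unfold cc hh
    rw [prod_range_succ]; ring
  rw [g1 x, g1 y, g2]
  have := wz_alg p x y (p ^ (2 * J)) hp hx hy (by simpa using h1 0)
    (by convert h1 (J+1) using 2; ring) (by convert h1 (J+2) using 2; ring)
    (by convert h2 (J+1) using 2; ring) (by convert h2 (J+2) using 2; ring)
    (by convert h3 J using 2; ring) (by convert h4 J using 2; ring)
    (by convert hr (4*J+4) (by omega) using 2; ring)
  have k1 : ∀ z : K, ∀ i : ℕ, z * p ^ (2 * J + i) = z * p ^ i * p ^ (2 * J) := by intros; ring
  have k2 : ∀ i : ℕ, p ^ (4 * J + i) = p ^ i * (p ^ (2 * J)) ^ 2 := by intros; ring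
  rw [show 2 * (J + 1) + 1 = 2 * J + 3 by ring, show 2 * (J + 1) + 2 = 2 * J + 4 by ring,
    show 4 * (J + 1) + 1 = 4 * J + 5 by ring, show 4 * (J + 1) + 2 = 4 * J + 6 by ring]
  simp only [k1, k2, pow_one]
  exact aux_step _ _ _ _ _ _ _ _ _ _ _ _ _ _ _ _ _ _ _ this

lemma wz_sum (p x y : K) (hp : p ≠ 0) (hx : x ≠ 0) (hy : y ≠ 0)
    (hr : ∀ i : ℕ, 0 < i → 1 - p ^ i ≠ 0)
    (h1 : ∀ i : ℕ, 1 - x * p ^ (2 * i) ≠ 0)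
    (h2 : ∀ i : ℕ, 1 - x⁻¹ * p ^ (2 * i) ≠ 0)
    (h3 : ∀ i : ℕ, 1 - y * p ^ (2 * i + 2) ≠ 0)
    (h4 : ∀ i : ℕ, 1 - y⁻¹ * p ^ (2 * i + 2) ≠ 0) (J : ℕ) :
    ∑ k ∈ range (J + 1), cc p k * (1 - p ^ (4 * k + 1)) * gg p y k *
      ((1 - p*x*y⁻¹) * (1-p*x*y) * (x-p^2) * gg p (x * p ^ 2) k +
       (x - p*y)*(x-p*y⁻¹)*(1-x*p^2) * gg p (x⁻¹ * p ^ 2) k) =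
    (1-p)*(1+x)*(1-x*p^2)*(x-p^2) * (cc p J * gg p y J * gg p x J *
      ((1 - p ^ (4 * J + 2)) * ((1 - y * p ^ (2 * J + 1)) * (1 - y⁻¹ * p ^ (2 * J + 1))) /
       ((1 - x * p ^ (2 * J + 2)) * (1 - x⁻¹ * p ^ (2 * J + 2))))) := by
  induction J with
  | zero => exact wz_zero p x y hp hx hy hr h1 h2 h3 h4
  | succ J ih =>
    rw [sum_range_succ, ih]
    exact wz_step p x y hp hx hy hr h1 h2 h3 h4 J

lemma SS_rec (p x y : K) (hp : p ≠ 0) (hx : x ≠ 0) (hy : y ≠ 0)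
    (hr : ∀ i : ℕ, 0 < i → 1 - p ^ i ≠ 0)
    (h1 : ∀ i : ℕ, 1 - x * p ^ (2 * i) ≠ 0)
    (h2 : ∀ i : ℕ, 1 - x⁻¹ * p ^ (2 * i) ≠ 0)
    (h3 : ∀ i : ℕ, 1 - y * p ^ (2 * i + 2) ≠ 0)
    (h4 : ∀ i : ℕ, 1 - y⁻¹ * p ^ (2 * i + 2) ≠ 0) (J : ℕ) (h0 : gg p x J = 0) :
    (1 - p*x*y⁻¹) * (1-p*x*y) * (x-p^2) * SS p (x * p ^ 2) y J +
       (x - p*y)*(x-p*y⁻¹)*(1-x*p^2) * SS p (x⁻¹ * p ^ 2) y J = 0 := by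
  have := wz_sum p x y hp hx hy hr h1 h2 h3 h4 J
  rw [h0] at this
  simp only [mul_zero, zero_mul] at this
  rw [← this, SS, SS, mul_sum, mul_sum, ← sum_add_distrib]
  refine sum_congr rfl fun i _ => ?_
  ring

lemma gg_zero (p : K) (hp : p ≠ 0) (j J : ℕ) (h : 2 * j + 1 ≤ J) : gg p (p ^ (4 * j + 1)) J = 0 := by
  unfold gg
  refine prod_eq_zero (i := 2 * j) (by simp; omega) ?_
  rw [show 2 * (2 * j) + 1 = 4 * j + 1 by ring, inv_mul_cancel₀ (pow_ne_zero _ hp)]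
  simp

lemma odd_ne (p : K) (hp : p ≠ 0) (hr : ∀ i : ℕ, 0 < i → 1 - p ^ i ≠ 0) (a b : ℕ) (h : a ≠ b) :
    1 - (p ^ a)⁻¹ * p ^ b ≠ 0 := by
  intro h0
  have ha : p ^ a = p ^ b := by
    have := pow_ne_zero a hp
    field_simp at h0
    linear_combination h0
  rcases lt_or_gt_of_ne h with h | h
  · apply hr (b - a) (by omega)
    have : p ^ b = p ^ a * p ^ (b - a) := by rw [← pow_add]; congr 1; omega
    rw [this] at ha
    have := pow_ne_zero a hp
    have h2 : p ^ a * (1 - p ^ (b - a)) = 0 := by linear_combination ha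
    exact (mul_eq_zero.1 h2).resolve_left this
  · apply hr (a - b) (by omega)
    have : p ^ a = p ^ b * p ^ (a - b) := by rw [← pow_add]; congr 1; omega
    rw [this] at ha
    have := pow_ne_zero b hp
    have h2 : p ^ b * (1 - p ^ (a - b)) = 0 := by linear_combination -ha
    exact (mul_eq_zero.1 h2).resolve_left this

lemma SS_rec' (p y : K) (hp : p ≠ 0) (hy : y ≠ 0)
    (hr : ∀ i : ℕ, 0 < i → 1 - p ^ i ≠ 0)
    (h3 : ∀ i : ℕ, 1 - y * p ^ (2 * i + 2) ≠ 0)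
    (h4 : ∀ i : ℕ, 1 - y⁻¹ * p ^ (2 * i + 2) ≠ 0) (J j : ℕ) (hj : 2 * j + 1 ≤ J) :
    (1 - p*p^(4*j+1)*y⁻¹) * (1-p*p^(4*j+1)*y) * (p^(4*j+1)-p^2) * SS p (p^(4*j+3)) y J +
       (p^(4*j+1) - p*y)*(p^(4*j+1)-p*y⁻¹)*(1-p^(4*j+3)) * SS p ((p^(4*j+1))⁻¹ * p ^ 2) y J = 0 := by
  have := SS_rec p (p^(4*j+1)) y hp (pow_ne_zero _ hp) hy hr ?_ ?_ h3 h4 J (gg_zero p hp j J hj)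
  · rwa [← pow_add] at this
  · intro i
    rw [← pow_add]
    exact hr _ (by omega)
  · intro i
    exact odd_ne p hp hr _ _ (by omega)

lemma SS_inv (p x y : K) (J : ℕ) : SS p x⁻¹ y J = SS p x y J := by
  unfold SS
  simp only [gg_inv]

lemma SS_prev (p y : K) (hp : p ≠ 0) (J j : ℕ) :
   SS p ((p^(4*(j+1)+1))⁻¹ * p ^ 2) y J = SS p (p^(4*j+3)) y J := by
  rw [← SS_inv]
  congr 1
  rw [show 4*(j+1)+1 = 4*j+3+2 by ring, pow_add _ _ 2]
  field_simp

lemma SS_start (p y : K) (hp : p ≠ 0) (J : ℕ) :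
   SS p ((p^(4*0+1))⁻¹ * p ^ 2) y J = 1 - p := by
  have e : (p^(4*0+1))⁻¹ * p ^ 2 = p := by field_simp; try ring
  rw [e]
  unfold SS
  rw [sum_range_succ']
  have : ∀ k, gg p p (k + 1) = 0 := by
    intro k
    have := gg_zero p hp 0 (k+1) (by omega)
    simpa using this
  simp only [this, mul_zero, sum_const_zero]
  simp [cc, hh, gg]

lemma SS_one (p : K) (hp : p ≠ 0) (hr : ∀ i : ℕ, 0 < i → 1 - p ^ i ≠ 0) (J j : ℕ) (hj : 2 * j + 1 ≤ J) :
    SS p (p^(4*j+3)) 1 J = 0 := by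
  have key := fun j hj => SS_rec' p 1 hp one_ne_zero hr (by intro i; simpa using hr (2*i+2) (by omega))
    (by intro i; simpa using hr (2*i+2) (by omega)) J j hj
  have nz : ∀ j : ℕ, (1 - p*p^(4*j+1)*1⁻¹) * (1-p*p^(4*j+1)*1) * (p^(4*j+1)-p^2) ≠ 0 := by
    intro j
    refine mul_ne_zero (mul_ne_zero ?_ ?_) ?_
    · have := hr (4*j+2) (by omega)
      convert this using 2; simp; ring
    · have := hr (4*j+2) (by omega)
      convert this using 2; ring
    · have := odd_ne p hp hr (4*j+1) 2 (by omega)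
      have h := mul_ne_zero (pow_ne_zero (4*j+1) hp) this
      intro h0
      apply h
      have := pow_ne_zero (4*j+1) hp
      field_simp
      linear_combination h0
  induction j with
  | zero =>
    have := key 0 hj
    simp only [mul_zero, zero_add, pow_one, mul_one, sub_self, zero_mul, add_zero] at this
    have n0 := nz 0
    simp only [mul_zero, zero_add, pow_one, mul_one] at n0
    exact (mul_eq_zero.1 this).resolve_left n0
  | succ j ih =>
    have := key (j+1) hj
    rw [SS_prev p 1 hp, ih (by omega), mul_zero, add_zero] at this
    exact (mul_eq_zero.1 this).resolve_left (nz _)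

lemma SS_val (p y : K) (hp : p ≠ 0) (hy : y ≠ 0) (hr : ∀ i : ℕ, 0 < i → 1 - p ^ i ≠ 0)
    (h3 : ∀ i : ℕ, 1 - y * p ^ i ≠ 0)
    (h4 : ∀ i : ℕ, 1 - y⁻¹ * p ^ (2 * i + 2) ≠ 0) (J j : ℕ) (hj : 2 * j + 1 ≤ J) :
    SS p (p^(4*j+3)) y J = -p * (1 - p ^ (4*j+3)) * ∏ i ∈ range (j+1),
      ((1 - y * p ^ (4*i)) * (1 - y⁻¹ * p ^ (4*i))) / ((1 - y * p ^ (4*i+2)) * (1 - y⁻¹ * p ^ (4*i+2))) := by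
  have key := fun j hj => SS_rec' p y hp hy hr (fun i => h3 _) h4 J j hj
  have hyy : y * y⁻¹ = 1 := mul_inv_cancel₀ hy
  have f1 : ∀ a : K, (a - p * y) * (a - p * y⁻¹) = a ^ 2 - a*p*(y+y⁻¹) + p^2 := by
    intro a; linear_combination p^2 * hyy
  have f2 : ∀ a : K, (1 - y * a) * (1 - y⁻¹ * a) = 1 - a*(y+y⁻¹) + a^2 := by
    intro a; linear_combination a^2 * hyy
  have e : ∀ j : ℕ, (p^(4*j+1) - p*y)*(p^(4*j+1)-p*y⁻¹) = p^2 * ((1 - y * p ^ (4*j)) * (1 - y⁻¹ * p ^ (4*j))) := by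
    intro j
    rw [f1, f2]; ring
  have h4' : ∀ j : ℕ, 1 - y⁻¹ * p ^ (4 * j + 2) ≠ 0 := by
    intro j; convert h4 (2 * j) using 4; ring
  have e' : ∀ j : ℕ, (1 - p*p^(4*j+1)*y⁻¹) * (1-p*p^(4*j+1)*y) = (1 - y * p ^ (4*j+2)) * (1 - y⁻¹ * p ^ (4*j+2)) := by
    intro j; ring
  induction j with
  | zero =>
    have := key 0 hj
    rw [SS_start p y hp, e, e'] at this
    rw [prod_range_succ, prod_range_zero]
    have m1 := h3 (4*0+2)
    have m2 := h4' 0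
    have m3 := hr 1 (by omega)
    simp only [mul_zero, zero_add, pow_zero, mul_one, one_mul, pow_one] at *
    rw [mul_div_assoc', eq_div_iff (mul_ne_zero m1 m2)]
    have : p * (1 - p) * (SS p (p ^ 3) y J * ((1 - y * p ^ 2) * (1 - y⁻¹ * p ^ 2)) - -p * (1 - p ^ 3) * ((1 - y) * (1 - y⁻¹))) = 0 := by
      linear_combination this
    have := (mul_eq_zero.1 this).resolve_left (mul_ne_zero hp m3)
    linear_combination this
  | succ j ih =>
    have := key (j+1) hj
    rw [SS_prev p y hp, ih (by omega), e, e'] at this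
    rw [prod_range_succ]
    have m1 := h3 (4*(j+1)+2)
    have m2 := h4' (j+1)
    have m3 := hr (4*j+3) (by omega)
    have q1 : p ^ (4*(j+1)+1) - p^2 = -p^2 * (1 - p^(4*j+3)) := by ring
    rw [q1] at this
    generalize (∏ i ∈ range (j+1),
      ((1 - y * p ^ (4*i)) * (1 - y⁻¹ * p ^ (4*i))) / ((1 - y * p ^ (4*i+2)) * (1 - y⁻¹ * p ^ (4*i+2)))) = PP at *
    rw [mul_div_assoc', mul_div_assoc', eq_div_iff (mul_ne_zero m1 m2)]
    have h5 : p^2 * (1 - p^(4*j+3)) ≠ 0 := mul_ne_zero (pow_ne_zero _ hp) m3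
    apply mul_left_cancel₀ h5
    linear_combination -this
end Generic


section EvSec
open Polynomial

noncomputable def Ev (z : ℂ) (f : RatFunc ℚ) (v : ℂ) : Prop :=
  ∃ r s : ℚ[X], aeval z s ≠ 0 ∧
    f = algebraMap ℚ[X] (RatFunc ℚ) r / algebraMap ℚ[X] (RatFunc ℚ) s ∧ v = aeval z r / aeval z s

lemma am_ne {z : ℂ} {s : ℚ[X]} (h : aeval z s ≠ 0) : algebraMap ℚ[X] (RatFunc ℚ) s ≠ 0 := by
  have : s ≠ 0 := by rintro rfl; simp at h
  simpa using this

variable {z : ℂ} {f g : RatFunc ℚ} {v w : ℂ}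

lemma Ev.poly (z : ℂ) (r : ℚ[X]) : Ev z (algebraMap ℚ[X] (RatFunc ℚ) r) (aeval z r) :=
  ⟨r, 1, by simp, by simp, by simp⟩

lemma Ev.q (z : ℂ) : Ev z q z := by
  have := Ev.poly z X
  simpa [_root_.q] using this

lemma Ev.one (z : ℂ) : Ev z 1 1 := by
  have := Ev.poly z 1
  simpa using this

lemma Ev.zero (z : ℂ) : Ev z 0 0 := by
  have := Ev.poly z 0
  simpa using this

lemma Ev.add (h : Ev z f v) (h' : Ev z g w) : Ev z (f + g) (v + w) := by
  obtain ⟨r, s, hs, rfl, rfl⟩ := h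
  obtain ⟨r', s', hs', rfl, rfl⟩ := h'
  refine ⟨r * s' + s * r', s * s', by simp [hs, hs'], ?_, ?_⟩
  · rw [div_add_div _ _ (am_ne hs) (am_ne hs')]; simp
  · rw [div_add_div _ _ hs hs']; simp

lemma Ev.neg (h : Ev z f v) : Ev z (-f) (-v) := by
  obtain ⟨r, s, hs, rfl, rfl⟩ := h
  refine ⟨-r, s, hs, ?_, ?_⟩
  · rw [map_neg, neg_div]
  · rw [map_neg, neg_div]

lemma Ev.sub (h : Ev z f v) (h' : Ev z g w) : Ev z (f - g) (v - w) := by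
  rw [sub_eq_add_neg, sub_eq_add_neg]; exact h.add h'.neg

lemma Ev.mul (h : Ev z f v) (h' : Ev z g w) : Ev z (f * g) (v * w) := by
  obtain ⟨r, s, hs, rfl, rfl⟩ := h
  obtain ⟨r', s', hs', rfl, rfl⟩ := h'
  refine ⟨r * r', s * s', by simp [hs, hs'], ?_, ?_⟩
  · rw [div_mul_div_comm]; simp
  · rw [div_mul_div_comm]; simp

lemma Ev.inv (h : Ev z f v) (hv : v ≠ 0) : Ev z f⁻¹ v⁻¹ := by
  obtain ⟨r, s, hs, rfl, rfl⟩ := h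
  have hr := (div_ne_zero_iff.1 hv).1
  exact ⟨s, r, hr, by rw [inv_div], by rw [inv_div]⟩

lemma Ev.div (h : Ev z f v) (h' : Ev z g w) (hw : w ≠ 0) : Ev z (f / g) (v / w) := by
  rw [div_eq_mul_inv, div_eq_mul_inv]; exact h.mul (h'.inv hw)

lemma Ev.ne_zero (h : Ev z f v) (hv : v ≠ 0) : f ≠ 0 := by
  obtain ⟨r, s, hs, rfl, rfl⟩ := h
  exact div_ne_zero (am_ne (div_ne_zero_iff.1 hv).1) (am_ne hs)

lemma Ev.pow (h : Ev z f v) (k : ℕ) : Ev z (f ^ k) (v ^ k) := by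
  induction k with
  | zero => simpa using Ev.one z
  | succ k ih => rw [pow_succ, pow_succ]; exact ih.mul h

lemma Ev.sum {ι : Type*} (s : Finset ι) (F : ι → RatFunc ℚ) (V : ι → ℂ)
    (h : ∀ i ∈ s, Ev z (F i) (V i)) : Ev z (∑ i ∈ s, F i) (∑ i ∈ s, V i) := by
  classical
  induction s using Finset.induction_on with
  | empty => simpa using Ev.zero z
  | insert a s ha ih =>
    rw [sum_insert ha, sum_insert ha]
    exact (h a (by simp)).add (ih fun i hi => h i (by simp [hi]))

lemma Ev.prod {ι : Type*} (s : Finset ι) (F : ι → RatFunc ℚ) (V : ι → ℂ)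
    (h : ∀ i ∈ s, Ev z (F i) (V i)) : Ev z (∏ i ∈ s, F i) (∏ i ∈ s, V i) := by
  classical
  induction s using Finset.induction_on with
  | empty => simpa using Ev.one z
  | insert a s ha ih =>
    rw [prod_insert ha, prod_insert ha]
    exact (h a (by simp)).mul (ih fun i hi => h i (by simp [hi]))

lemma Ev.qp (z : ℂ) (k : ℕ) : Ev z (1 - _root_.q ^ k) (1 - z ^ k) := (Ev.one z).sub ((Ev.q z).pow k)

/-- divisibility -/
def Dv (P : ℚ[X]) (f : RatFunc ℚ) : Prop :=
  ∃ r s : ℚ[X], IsCoprime s P ∧ f = algebraMap ℚ[X] (RatFunc ℚ) P *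
      (algebraMap ℚ[X] (RatFunc ℚ) r / algebraMap ℚ[X] (RatFunc ℚ) s)

lemma Dv.num {P : ℚ[X]} (h : Dv P f) (hP : ¬ IsUnit P) : P ∣ f.num ∧ IsCoprime f.denom P := by
  obtain ⟨r, s, hs, hf⟩ := h
  have s0 : s ≠ 0 := by
    rintro rfl
    exact hP (isCoprime_zero_left.1 hs)
  have key : f.num * s = P * r * f.denom := by
    have h1 := RatFunc.num_div_denom f
    have d0 := RatFunc.denom_ne_zero f
    have d0' : algebraMap ℚ[X] (RatFunc ℚ) f.denom ≠ 0 := by simpa using d0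
    have s0' : algebraMap ℚ[X] (RatFunc ℚ) s ≠ 0 := by simpa using s0
    rw [← h1, mul_div_assoc', div_eq_div_iff d0' s0'] at hf
    apply RatFunc.algebraMap_injective ℚ
    simp only [map_mul]
    exact hf
  have cop := RatFunc.isCoprime_num_denom f
  constructor
  · have : P ∣ f.num * s := ⟨r * f.denom, by rw [key]; ring⟩
    exact hs.symm.dvd_of_dvd_mul_right this
  · have : f.denom ∣ f.num * s := ⟨P * r, by rw [key]; ring⟩
    exact hs.of_isCoprime_of_dvd_left (cop.symm.dvd_of_dvd_mul_left this)

lemma Dv.of_num {P : ℚ[X]} (h : P ∣ f.num) (h' : IsCoprime f.denom P) : Dv P f := by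
  obtain ⟨c, hc⟩ := h
  refine ⟨c, f.denom, h', ?_⟩
  conv_lhs => rw [← RatFunc.num_div_denom f, hc]
  rw [map_mul, mul_div_assoc]

lemma cop_cyc {n : ℕ} (hn : 0 < n) (hz : IsPrimitiveRoot z n) {s : ℚ[X]} (hs : aeval z s ≠ 0) :
    IsCoprime s (cyclotomic n ℚ) := by
  refine ((cyclotomic.irreducible_rat hn).coprime_iff_not_dvd.2 ?_).symm
  rintro ⟨c, rfl⟩
  apply hs
  rw [map_mul, cyclotomic_eq_minpoly_rat hz hn, minpoly.aeval, zero_mul]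

lemma pow_sub_dvd {n : ℕ} (hn : 0 < n) : ∃ c : ℚ[X], 1 - _root_.q ^ n =
    algebraMap ℚ[X] (RatFunc ℚ) (cyclotomic n ℚ) * algebraMap ℚ[X] (RatFunc ℚ) c := by
  obtain ⟨c, hc⟩ := cyclotomic.dvd_X_pow_sub_one n ℚ
  refine ⟨-c, ?_⟩
  rw [← map_mul, mul_neg, ← hc]
  simp [_root_.q]

lemma Dv.of_ev {n : ℕ} (hn : 0 < n) (hz : IsPrimitiveRoot z n) (k : ℕ) (h : Ev z g v) :
    Dv (cyclotomic n ℚ ^ k) ((1 - _root_.q ^ n) ^ k * g) := by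
  obtain ⟨r, s, hs, rfl, rfl⟩ := h
  obtain ⟨c, hc⟩ := pow_sub_dvd hn
  refine ⟨c ^ k * r, s, (cop_cyc hn hz hs).pow_right, ?_⟩
  rw [hc]
  simp only [map_pow, map_mul]
  ring

lemma Dv.of_ev0 {n : ℕ} (hn : 0 < n) (hz : IsPrimitiveRoot z n) (k : ℕ) (h : Ev z g 0) :
    Dv (cyclotomic n ℚ ^ (k + 1)) ((1 - _root_.q ^ n) ^ k * g) := by
  obtain ⟨r, s, hs, rfl, h0⟩ := h
  obtain ⟨c, hc⟩ := pow_sub_dvd hn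
  have hr : aeval z r = 0 := by
    have := h0.symm
    rw [div_eq_zero_iff] at this
    exact this.resolve_right hs
  have := minpoly.dvd ℚ z hr
  rw [← cyclotomic_eq_minpoly_rat hz hn] at this
  obtain ⟨r', rfl⟩ := this
  refine ⟨c ^ k * r', s, (cop_cyc hn hz hs).pow_right, ?_⟩
  rw [hc]
  simp only [map_pow, map_mul]
  ring

lemma Dv.add {P : ℚ[X]} (hP : ¬ IsUnit P) (h : Dv P f) (h' : Dv P g) : Dv P (f + g) := by
  obtain ⟨r, s, hs, rfl⟩ := h
  obtain ⟨r', s', hs', rfl⟩ := h'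
  have s0 : ∀ s : ℚ[X], IsCoprime s P → algebraMap ℚ[X] (RatFunc ℚ) s ≠ 0 := by
    intro s hs h
    have : s = 0 := by simpa using h
    rw [this] at hs
    exact hP (isCoprime_zero_left.1 hs)
  refine ⟨r * s' + s * r', s * s', hs.mul_left hs', ?_⟩
  rw [← mul_add, div_add_div _ _ (s0 _ hs) (s0 _ hs')]
  simp

lemma Dv.combine {n : ℕ} (hn : 1 < n) (h5 : Dv (cyclotomic n ℚ ^ 5) f)
    (hd : ∀ d, d ∣ n → 1 < d → d < n → Dv (cyclotomic d ℚ) f) :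
    Dv ((∑ i ∈ Finset.range n, X ^ i) * cyclotomic n ℚ ^ 4) f := by
  have hn0 : 0 < n := by omega
  have nu : ∀ d, 0 < d → ¬ IsUnit (cyclotomic d ℚ) := fun d hd =>
    (cyclotomic.irreducible_rat hd).not_isUnit
  have eq : (∑ i ∈ Finset.range n, (X : ℚ[X]) ^ i) * cyclotomic n ℚ ^ 4 =
      cyclotomic n ℚ ^ 5 * ∏ d ∈ n.properDivisors.erase 1, cyclotomic d ℚ := by
    rw [← prod_cyclotomic_eq_geom_sum hn0 ℚ]
    rw [← Nat.insert_self_properDivisors hn0.ne', Finset.erase_insert_of_ne (by omega),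
      Finset.prod_insert (by simp)]
    ring
  rw [eq]
  have h5' := h5.num (by
    intro h
    exact nu n hn0 (isUnit_pow_iff (by norm_num) |>.1 h))
  have hd' : ∀ d ∈ n.properDivisors.erase 1, cyclotomic d ℚ ∣ f.num ∧ IsCoprime f.denom (cyclotomic d ℚ) := by
    intro d hdm
    simp only [Finset.mem_erase, Nat.mem_properDivisors] at hdm
    have : 0 < d := Nat.pos_of_dvd_of_pos hdm.2.1 hn0
    exact (hd d hdm.2.1 (by omega) hdm.2.2).num (nu d this)
  apply Dv.of_num
  · refine IsCoprime.mul_dvd ?_ h5'.1 ?_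
    · apply IsCoprime.pow_left
      apply IsCoprime.prod_right
      intro d hdm
      simp only [Finset.mem_erase, Nat.mem_properDivisors] at hdm
      exact cyclotomic.isCoprime_rat (by omega)
    · apply Finset.prod_dvd_of_coprime
      · intro a _ b _ hab
        exact cyclotomic.isCoprime_rat hab
      · exact fun d hd => (hd' d hd).1
  · exact h5'.2.mul_right (IsCoprime.prod_right fun d hd => (hd' d hd).2)

lemma q_ne : _root_.q ≠ 0 := by
  unfold _root_.q
  exact RatFunc.X_ne_zero

lemma q_pow_ne (i : ℕ) (hi : 0 < i) : 1 - _root_.q ^ i ≠ 0 := by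
  have : (1 - _root_.q ^ i) = algebraMap ℚ[X] (RatFunc ℚ) (1 - X ^ i) := by simp [_root_.q]
  rw [this]
  have h : (1 - X ^ i : ℚ[X]) ≠ 0 := by
    intro h
    have := congrArg (fun p : ℚ[X] => p.coeff 0) h
    simp [hi.ne] at this
  exact (map_ne_zero_iff _ (RatFunc.algebraMap_injective ℚ)).2 h

lemma ev_ratio {d : ℕ} (hz : IsPrimitiveRoot z d) (a b : ℕ) (hb : 0 < b) (h : d ∣ b → d ∣ a) :
    ∃ v, Ev z ((1 - _root_.q ^ a) / (1 - _root_.q ^ b)) v := by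
  by_cases hdb : d ∣ b
  · obtain ⟨b', rfl⟩ := hdb
    obtain ⟨a', rfl⟩ := h ⟨_, rfl⟩
    have hd : 0 < d := Nat.pos_of_mul_pos_right hb
    have hb' : 0 < b' := Nat.pos_of_mul_pos_left hb
    have key : ∀ c : ℕ, 1 - _root_.q ^ (d * c) = (1 - _root_.q ^ d) * ∑ i ∈ Finset.range c, (_root_.q ^ d) ^ i := by
      intro c
      rw [mul_neg_geom_sum, pow_mul]
    have evs : ∀ c : ℕ, Ev z (∑ i ∈ Finset.range c, (_root_.q ^ d) ^ i) c := by
      intro c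
      have := Ev.sum (z := z) (Finset.range c) (fun i => (_root_.q ^ d) ^ i) (fun i => (z ^ d) ^ i)
        (fun i _ => ((Ev.q z).pow d).pow i)
      simpa [hz.pow_eq_one] using this
    rw [key, key, mul_div_mul_left _ _ (q_pow_ne d hd)]
    exact ⟨_, (evs a').div (evs b') (by exact_mod_cast hb'.ne')⟩
  · refine ⟨_, (Ev.qp z a).div (Ev.qp z b) ?_⟩
    intro h0
    exact hdb (hz.dvd_of_pow_eq_one b (by linear_combination -h0))

end EvSec

section Zeta
variable {K : Type*} [Field K]

noncomputable def rho (p : K) (i : ℕ) : K :=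
  -p * ((1 - p ^ (4 * i + 2)) / (1 - p ^ (4 * i + 4))) * ((1 - p ^ (2 * i + 1)) / (1 - p ^ (2 * i + 2))) ^ 4

noncomputable def EE (p : K) (k : ℕ) : K := ∏ i ∈ range k, rho p i

lemma EE_eq (p : K) (k : ℕ) : cc p k * gg p 1 k * gg p 1 k = EE p k := by
  unfold cc hh gg EE
  rw [← card_range k, ← prod_const, card_range, ← prod_mul_distrib, ← prod_mul_distrib, ← prod_mul_distrib]
  refine prod_congr rfl fun i _ => ?_
  unfold rho
  simp only [one_mul, inv_one, div_pow]
  simp only [div_eq_mul_inv, mul_inv, ← inv_pow]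
  ring

lemma zeta_ne {p : K} {N : ℕ} (hz : IsPrimitiveRoot p (2 * N + 1)) (i : ℕ) (h0 : 0 < i) (h1 : i < 2 * N + 1) :
    1 - p ^ i ≠ 0 := by
  intro h
  have := hz.dvd_of_pow_eq_one i (by linear_combination -h)
  exact absurd (Nat.le_of_dvd h0 this) (by omega)

lemma zeta_ne2 {p : K} {N : ℕ} (hz : IsPrimitiveRoot p (2 * N + 1)) (i : ℕ) (h0 : 0 < i) (h1 : i < 2 * N + 1) :
    1 - p ^ (2 * i) ≠ 0 := by
  intro h
  have := hz.dvd_of_pow_eq_one (2 * i) (by linear_combination -h)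
  have := (Nat.Coprime.dvd_of_dvd_mul_left (by simp) this)
  exact absurd (Nat.le_of_dvd h0 this) (by omega)

lemma zeta_mul {p : K} {d : ℕ} (hz : IsPrimitiveRoot p d) (a b c : ℕ) (h : a + b = c * d) :
    p ^ a * p ^ b = 1 := by
  rw [← pow_add, h, mul_comm, pow_mul, hz.pow_eq_one, one_pow]

lemma rho_mul {p : K} {N : ℕ} (hz : IsPrimitiveRoot p (2 * N + 1)) (k : ℕ) (hk : k < N) :
    rho p k * rho p (N - 1 - k) * p ^ 4 = 1 := by
  unfold rho
  obtain ⟨j, rfl⟩ : ∃ j, N = k + j + 1 := ⟨N - k - 1, by omega⟩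
  rw [show k + j + 1 - 1 - k = j by omega]
  have hp : p ≠ 0 := hz.ne_zero (by omega)
  have a1 := zeta_ne hz (2 * k + 1) (by omega) (by omega)
  have a2 := zeta_ne hz (2 * k + 2) (by omega) (by omega)
  have a3 := zeta_ne2 hz (2 * k + 1) (by omega) (by omega)
  have a4 := zeta_ne2 hz (2 * k + 2) (by omega) (by omega)
  have e1 : p ^ (2 * j + 1) = (p ^ (2 * k + 2))⁻¹ := eq_inv_of_mul_eq_one_left (zeta_mul hz _ _ 1 (by ring))
  have e2 : p ^ (2 * j + 2) = (p ^ (2 * k + 1))⁻¹ := eq_inv_of_mul_eq_one_left (zeta_mul hz _ _ 1 (by ring))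
  have e3 : p ^ (4 * j + 2) = ((p ^ (2 * k + 2))⁻¹)^2 := by rw [← e1]; ring
  have e4 : p ^ (4 * j + 4) = ((p ^ (2 * k + 1))⁻¹)^2 := by rw [← e2]; ring
  have e5 : p ^ (4 * k + 2) = (p ^ (2 * k + 1))^2 := by ring
  have e6 : p ^ (4 * k + 4) = (p ^ (2 * k + 2))^2 := by ring
  rw [mul_comm, pow_mul, ] at a3 a4
  have e7 : p ^ (2 * k + 2) = p * p ^ (2 * k + 1) := by ring
  rw [e1, e2, e3, e4, e5, e6]
  have u0 : p ^ (2 * k + 1) ≠ 0 := pow_ne_zero _ hp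
  rw [e7] at a2 a4 ⊢
  clear e1 e2 e3 e4 e5 e6 e7
  generalize p ^ (2 * k + 1) = u at *
  have f1 : ∀ x : K, x ≠ 0 → 1 - x⁻¹ = -(1 - x) / x := by intro x hx; field_simp; ring
  have f2 : ∀ x : K, x ≠ 0 → 1 - (x⁻¹)^2 = -(1 - x^2) / x^2 := by intro x hx; field_simp; ring
  rw [f1 _ u0, f2 _ u0, f1 _ (mul_ne_zero hp u0), f2 _ (mul_ne_zero hp u0)]
  have w0 : p * u ≠ 0 := mul_ne_zero hp u0
  generalize 1 - u = x1 at *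
  generalize 1 - p * u = x2 at *
  generalize 1 - u ^ 2 = x3 at *
  generalize 1 - (p * u) ^ 2 = x4 at *
  field_simp

lemma EE_top {p : K} {N : ℕ} (hz : IsPrimitiveRoot p (2 * N + 1)) : EE p N = p := by
  have hp : p ≠ 0 := hz.ne_zero (by omega)
  have h1 : EE p N = (∏ i ∈ range N, (-p * (1 - p ^ (4 * i + 2)) * (1 - p ^ (2 * i + 1)) ^ 4)) /
     ∏ i ∈ range N, ((1 - p ^ (4 * i + 4)) * (1 - p ^ (2 * i + 2)) ^ 4) := by
    rw [EE, ← prod_div_distrib]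
    refine prod_congr rfl fun i _ => ?_
    simp only [rho, div_eq_mul_inv, mul_inv, mul_pow, inv_pow]
    ring
  have h2 : (∏ i ∈ range N, (-p * (1 - p ^ (4 * i + 2)) * (1 - p ^ (2 * i + 1)) ^ 4)) =
     (∏ i ∈ range N, p ^ (12 * i + 7)) * ∏ i ∈ range N, ((1 - p ^ (4 * i + 4)) * (1 - p ^ (2 * i + 2)) ^ 4) := by
    rw [← prod_range_reflect (fun i => (1 - p ^ (4 * i + 4)) * (1 - p ^ (2 * i + 2)) ^ 4), ← prod_mul_distrib]
    refine prod_congr rfl fun i hi => ?_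
    rw [mem_range] at hi
    obtain ⟨j, rfl⟩ : ∃ j, N = i + j + 1 := ⟨N - i - 1, by omega⟩
    rw [show i + j + 1 - 1 - i = j by omega]
    have e2 : p ^ (2 * j + 2) = (p ^ (2 * i + 1))⁻¹ := eq_inv_of_mul_eq_one_left (zeta_mul hz _ _ 1 (by ring))
    have e4 : p ^ (4 * j + 4) = ((p ^ (2 * i + 1))⁻¹)^2 := by rw [← e2]; ring
    have e5 : p ^ (4 * i + 2) = (p ^ (2 * i + 1))^2 := by ring
    have e6 : p ^ (12 * i + 7) = p * (p ^ (2 * i + 1))^6 := by ring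
    rw [e2, e4, e5, e6]
    have u0 : p ^ (2 * i + 1) ≠ 0 := pow_ne_zero _ hp
    generalize p ^ (2 * i + 1) = u at *
    field_simp
    ring
  have h3 : ∏ i ∈ range N, ((1 - p ^ (4 * i + 4)) * (1 - p ^ (2 * i + 2)) ^ 4) ≠ 0 := by
    refine prod_ne_zero_iff.2 fun i hi => ?_
    rw [mem_range] at hi
    refine mul_ne_zero ?_ (pow_ne_zero _ (zeta_ne hz _ (by omega) (by omega)))
    convert zeta_ne2 hz (2 * i + 2) (by omega) (by omega) using 3
    ring
  rw [h1, h2, mul_div_cancel_right₀ _ h3]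
  have h4 : ∀ M : ℕ, (∏ i ∈ range M, p ^ (12 * i + 7)) = p ^ (6 * M ^ 2 + M) := by
    intro M
    induction M with
    | zero => simp
    | succ M ih => rw [prod_range_succ, ih, ← pow_add]; congr 1; ring
  rw [h4]
  rcases N with _ | N
  · have := hz.pow_eq_one
    simp at this
    simp [this]
  · rw [show 6 * (N + 1) ^ 2 + (N + 1) = (2 * (N + 1) + 1) * (3 * N + 2) + 1 by ring, pow_succ, pow_mul, hz.pow_eq_one]
    simp

lemma EE_refl {p : K} {N : ℕ} (hz : IsPrimitiveRoot p (2 * N + 1)) (k : ℕ) (hk : k ≤ N) :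
    EE p (N - k) = p ^ (4 * k + 1) * EE p k := by
  induction k with
  | zero => rw [Nat.sub_zero, EE_top hz]; simp [EE]
  | succ k ih =>
    have ih := ih (by omega)
    have e1 : EE p (N - k) = EE p (N - (k + 1)) * rho p (N - 1 - k) := by
      rw [show N - k = N - (k + 1) + 1 by omega, show N - 1 - k = N - (k+1) by omega]
      exact prod_range_succ _ _
    have e2 : EE p (k + 1) = EE p k * rho p k := prod_range_succ _ _
    have e3 := rho_mul hz k (by omega)
    rw [e1] at ih
    rw [e2]
    linear_combination (p ^ 4 * rho p k) * ih - EE p (N - (k+1)) * e3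

lemma EE_anti {p : K} {N : ℕ} (hz : IsPrimitiveRoot p (2 * N + 1)) (k : ℕ) (hk : k ≤ N) :
    (1 - p ^ (4 * (N - k) + 1)) * EE p (N - k) = -((1 - p ^ (4 * k + 1)) * EE p k) := by
  rw [EE_refl hz k hk]
  have := zeta_mul hz (4 * (N - k) + 1) (4 * k + 1) 2 (by omega)
  linear_combination -EE p k * this

lemma sum_anti [CharZero K] {p : K} {N : ℕ} (hz : IsPrimitiveRoot p (2 * N + 1)) (W : ℕ → K)
    (hW : ∀ k ≤ N, W (N - k) = W k) :
    ∑ k ∈ range (N + 1), (1 - p ^ (4 * k + 1)) * EE p k * W k = 0 := by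
  have h := sum_range_reflect (fun k => (1 - p ^ (4 * k + 1)) * EE p k * W k) (N + 1)
  have h2 : ∑ j ∈ range (N + 1), (fun k => (1 - p ^ (4 * k + 1)) * EE p k * W k) (N + 1 - 1 - j) =
      - ∑ k ∈ range (N + 1), (1 - p ^ (4 * k + 1)) * EE p k * W k := by
    rw [← sum_neg_distrib]
    refine sum_congr rfl fun k hk => ?_
    have hk' : k ≤ N := by simp at hk; omega
    simp only [Nat.add_sub_cancel]
    rw [EE_anti hz k hk', hW k hk']
    ring
  rw [h2] at h
  exact self_eq_neg.1 h.symm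

noncomputable def lam (p : K) (i : ℕ) : K :=
  -(p ^ (2 * i + 1) / (1 - p ^ (2 * i + 1)) ^ 2) + p ^ (2 * i + 2) / (1 - p ^ (2 * i + 2)) ^ 2

noncomputable def Lam (p : K) (k : ℕ) : K := ∑ i ∈ range k, lam p i

lemma lam_refl {p : K} {N : ℕ} (hz : IsPrimitiveRoot p (2 * N + 1)) (k : ℕ) (hk : k < N) :
    lam p (N - 1 - k) = - lam p k := by
  unfold lam
  obtain ⟨j, rfl⟩ : ∃ j, N = k + j + 1 := ⟨N - k - 1, by omega⟩
  rw [show k + j + 1 - 1 - k = j by omega]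
  have hp : p ≠ 0 := hz.ne_zero (by omega)
  have a1 := zeta_ne hz (2 * k + 1) (by omega) (by omega)
  have a2 := zeta_ne hz (2 * k + 2) (by omega) (by omega)
  have e1 : p ^ (2 * j + 1) = (p ^ (2 * k + 2))⁻¹ := eq_inv_of_mul_eq_one_left (zeta_mul hz _ _ 1 (by ring))
  have e2 : p ^ (2 * j + 2) = (p ^ (2 * k + 1))⁻¹ := eq_inv_of_mul_eq_one_left (zeta_mul hz _ _ 1 (by ring))
  have key : ∀ x : K, x ≠ 0 → 1 - x ≠ 0 → x⁻¹ / (1 - x⁻¹) ^ 2 = x / (1 - x) ^ 2 := by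
    intro x hx hx1
    have f1 : 1 - x⁻¹ = -(1 - x) / x := by field_simp; ring
    rw [f1]
    generalize 1 - x = y at *
    field_simp
  rw [e1, e2, key _ (pow_ne_zero _ hp) a1, key _ (pow_ne_zero _ hp) a2]
  ring

lemma Lam_refl [CharZero K] {p : K} {N : ℕ} (hz : IsPrimitiveRoot p (2 * N + 1)) (k : ℕ) (hk : k ≤ N) :
    Lam p (N - k) = Lam p k := by
  induction k with
  | zero =>
    have h := sum_range_reflect (fun k => lam p k) N
    have h2 : ∑ j ∈ range N, (fun k => lam p k) (N - 1 - j) = - ∑ k ∈ range N, lam p k := by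
      rw [← sum_neg_distrib]
      exact sum_congr rfl fun k hk => lam_refl hz k (by simpa using hk)
    rw [h2] at h
    have := self_eq_neg.1 h.symm
    simpa [Lam] using this
  | succ k ih =>
    have ih := ih (by omega)
    have e1 : Lam p (N - k) = Lam p (N - (k + 1)) + lam p (N - 1 - k) := by
      rw [show N - k = N - (k + 1) + 1 by omega, show N - 1 - k = N - (k+1) by omega]
      exact sum_range_succ _ _
    have e2 : Lam p (k + 1) = Lam p k + lam p k := sum_range_succ _ _
    rw [lam_refl hz k (by omega)] at e1
    rw [e2]
    linear_combination ih - e1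
end Zeta


section DTSec
variable {z : ℂ} {t f f' g g' : RatFunc ℚ} {v l w m : ℂ}

def DT (z : ℂ) (t f f' : RatFunc ℚ) (v l : ℂ) : Prop :=
  Ev z f' v ∧ ∃ δ, f = f' + t * δ ∧ Ev z δ l

lemma Ev.cast (h : Ev z f v) (e : v = w) : Ev z f w := e ▸ h

lemma DT.one (z : ℂ) (t : RatFunc ℚ) : DT z t 1 1 1 0 := ⟨Ev.one z, 0, by simp, Ev.zero z⟩

lemma DT.mul (ht : Ev z t 0) (h : DT z t f f' v l) (h' : DT z t g g' w m) :
    DT z t (f * g) (f' * g') (v * w) (l * w + v * m) := by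
  obtain ⟨h1, d, rfl, h2⟩ := h
  obtain ⟨h1', d', rfl, h2'⟩ := h'
  refine ⟨h1.mul h1', d * g' + f' * d' + t * (d * d'), by ring, ?_⟩
  exact (((h2.mul h1').add (h1.mul h2')).add (ht.mul (h2.mul h2'))).cast (by ring)

lemma DT.inv (ht : Ev z t 0) (h : DT z t f f' v l) (hv : v ≠ 0) :
    DT z t f⁻¹ f'⁻¹ v⁻¹ (-l / v ^ 2) := by
  obtain ⟨h1, d, hf, h2⟩ := h
  have h3 : Ev z f v := by rw [hf]; exact (h1.add (ht.mul h2)).cast (by ring)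
  refine ⟨h1.inv hv, -d / (f * f'), ?_, ?_⟩
  · have := h3.ne_zero hv
    have := h1.ne_zero hv
    field_simp
    rw [hf]; ring
  · exact (h2.neg.div (h3.mul h1) (mul_ne_zero hv hv)).cast (by rw [sq])

lemma DT.div (ht : Ev z t 0) (h : DT z t f f' v l) (h' : DT z t g g' w m) (hw : w ≠ 0) :
    DT z t (f / g) (f' / g') (v / w) (l / w - v * m / w ^ 2) := by
  have := h.mul ht (h'.inv ht hw)
  simp only [div_eq_mul_inv] at this ⊢
  convert this using 1
  ring

lemma DT.prod (ht : Ev z t 0) (k : ℕ) (F F' : ℕ → RatFunc ℚ) (V : ℕ → ℂ)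
    (h : ∀ i < k, ∃ l, DT z t (F i) (F' i) (V i) l) :
    ∃ l, DT z t (∏ i ∈ range k, F i) (∏ i ∈ range k, F' i) (∏ i ∈ range k, V i) l := by
  induction k with
  | zero => exact ⟨0, by simpa using DT.one z t⟩
  | succ k ih =>
    obtain ⟨l, hl⟩ := ih fun i hi => h i (by omega)
    obtain ⟨l', hl'⟩ := h k (by omega)
    simp only [prod_range_succ]
    exact ⟨_, hl.mul ht hl'⟩

noncomputable def tt (n : ℕ) : RatFunc ℚ := (1 - q ^ n) ^ 2 * (q ^ n)⁻¹

lemma ev_qinv {n : ℕ} (hz : z ^ n = 1) : Ev z (q ^ n)⁻¹ 1 := by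
  have := ((Ev.q z).pow n).inv (by rw [hz]; exact one_ne_zero)
  exact this.cast (by rw [hz, inv_one])

lemma ev_tt {n : ℕ} (hz : z ^ n = 1) : Ev z (tt n) 0 :=
  (((Ev.qp z n).pow 2).mul (ev_qinv hz)).cast (by rw [hz]; simp)

lemma DT.base {n : ℕ} (a : ℕ) :
    DT z (tt n) ((1 - q ^ n * q ^ a) * (1 - (q ^ n)⁻¹ * q ^ a)) ((1 - q ^ a) ^ 2) ((1 - z ^ a) ^ 2) (-z ^ a) := by
  refine ⟨(Ev.qp z a).pow 2, -q ^ a, ?_, ((Ev.q z).pow a).neg⟩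
  unfold tt
  have : q ^ n ≠ 0 := pow_ne_zero _ q_ne
  field_simp
  ring

lemma DT.gg {n N : ℕ} (hn : n = 2 * N + 1) (hz : IsPrimitiveRoot z n) (k : ℕ) (hk : k ≤ N) :
    DT z (tt n) (gg q (q ^ n) k) (gg q 1 k) (gg z 1 k) (gg z 1 k * Lam z k) := by
  have ht := ev_tt hz.pow_eq_one
  induction k with
  | zero => simpa [_root_.gg, Lam] using DT.one z (tt n)
  | succ k ih =>
    have ih := ih (by omega)
    subst hn
    have a1 := zeta_ne hz (2 * k + 1) (by omega) (by omega)
    have a2 := zeta_ne hz (2 * k + 2) (by omega) (by omega)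
    have b := (DT.base (z := z) (n := 2 * N + 1) (2 * k + 1)).div ht (DT.base (2 * k + 2)) (pow_ne_zero 2 a2)
    have := ih.mul ht b
    have e : ∀ x : RatFunc ℚ, _root_.gg q x (k+1) = _root_.gg q x k * (((1 - x * q ^ (2 * k + 1)) * (1 - x⁻¹ * q ^ (2 * k + 1))) /
    ((1 - x * q ^ (2 * k + 2)) * (1 - x⁻¹ * q ^ (2 * k + 2)))) := fun x => prod_range_succ _ _
    have e' : ∀ x : ℂ, _root_.gg z x (k+1) = _root_.gg z x k * (((1 - x * z ^ (2 * k + 1)) * (1 - x⁻¹ * z ^ (2 * k + 1))) /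
    ((1 - x * z ^ (2 * k + 2)) * (1 - x⁻¹ * z ^ (2 * k + 2)))) := fun x => prod_range_succ _ _
    have e2 : Lam z (k + 1) = Lam z k + lam z k := sum_range_succ _ _
    rw [e, e, e', e2]
    simp only [one_mul, inv_one, ← sq]
    convert this using 1
    unfold lam
    generalize _root_.gg z 1 k = G
    generalize Lam z k = L
    generalize 1 - z ^ (2 * k + 1) = x at *
    generalize 1 - z ^ (2 * k + 2) = y at *
    field_simp
    ring

lemma ev_cc {N : ℕ} (hz : IsPrimitiveRoot z (2 * N + 1)) (k : ℕ) (hk : k ≤ N) :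
    Ev z (cc q k) (cc z k) := by
  refine ((Ev.q z).neg.pow k).mul (Ev.prod _ _ _ fun i hi => ?_)
  rw [mem_range] at hi
  refine (Ev.qp z _).div (Ev.qp z _) ?_
  have := zeta_ne2 hz (2 * i + 2) (by omega) (by omega)
  convert this using 3
  ring

lemma Dv.mul_ev {n : ℕ} (hn : 0 < n) (hz : IsPrimitiveRoot z n) (k : ℕ)
    (h : Dv (Polynomial.cyclotomic n ℚ ^ k) f) (h' : Ev z g v) :
    Dv (Polynomial.cyclotomic n ℚ ^ k) (f * g) := by
  obtain ⟨r, s, hs, rfl⟩ := h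
  obtain ⟨r', s', hs', rfl, rfl⟩ := h'
  refine ⟨r * r', s * s', hs.mul_left ((cop_cyc hn hz hs').pow_right), ?_⟩
  rw [mul_assoc, div_mul_div_comm, map_mul, map_mul]

noncomputable def FF (k : ℕ) : RatFunc ℚ := (1 - q ^ (4 * k + 1)) * EE q k

lemma partA {n N m : ℕ} (hn : n = 2 * N + 1) (hm : n = 4 * m + 3) (hz : IsPrimitiveRoot z n) :
    Dv (Polynomial.cyclotomic n ℚ ^ 5) (∑ k ∈ range (N + 1), FF k + SS q (q ^ n) (q ^ n) N) := by
  have s1 : SS q (q ^ n) 1 N = 0 := by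
    rw [hm]; exact SS_one q q_ne q_pow_ne N m (by omega)
  have key : ∀ k, ∃ δ, k ≤ N → gg q (q ^ n) k = gg q 1 k + tt n * δ ∧ Ev z δ (gg z 1 k * Lam z k) := by
    intro k
    by_cases hk : k ≤ N
    · obtain ⟨-, d, h1, h2⟩ := DT.gg hn hz k hk
      exact ⟨d, fun _ => ⟨h1, h2⟩⟩
    · exact ⟨0, fun h => absurd h hk⟩
  choose δ hδ using key
  have e1 : ∑ k ∈ range (N + 1), FF k + SS q (q ^ n) (q ^ n) N =
      (1 - q ^ n) ^ 4 * (((q ^ n)⁻¹) ^ 2 * ∑ k ∈ range (N + 1), (1 - q ^ (4 * k + 1)) * (cc q k * (δ k) ^ 2)) := by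
    have : ∑ k ∈ range (N + 1), FF k + SS q (q ^ n) (q ^ n) N =
      ∑ k ∈ range (N + 1), FF k + SS q (q ^ n) (q ^ n) N - 2 * SS q (q ^ n) 1 N := by rw [s1]; ring
    rw [this]
    unfold SS
    rw [mul_sum, mul_sum, mul_sum, ← sum_add_distrib, ← sum_sub_distrib]
    refine sum_congr rfl fun k hk => ?_
    rw [FF, ← EE_eq, (hδ k (by simp at hk; omega)).1, tt]
    ring
  rw [e1]
  refine Dv.of_ev0 (by omega) hz 4 ?_
  have hz' := hz
  rw [hn] at hz'
  have e2 := sum_anti hz' (fun k => Lam z k ^ 2) (fun k hk => by simp only [Lam_refl hz' k hk])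
  have e3 := Ev.sum (z := z) (range (N + 1)) (fun k => (1 - q ^ (4 * k + 1)) * (cc q k * (δ k) ^ 2))
    (fun k => (1 - z ^ (4 * k + 1)) * (cc z k * (gg z 1 k * Lam z k) ^ 2)) (fun k hk => by
      have hk' : k ≤ N := by simp at hk; omega
      exact (Ev.qp z _).mul ((ev_cc hz' k hk').mul ((hδ k hk').2.pow 2)))
  refine (((ev_qinv hz.pow_eq_one).pow 2).mul e3).cast ?_
  rw [one_pow, one_mul, ← e2]
  refine sum_congr rfl fun k _ => ?_
  rw [← EE_eq]
  ring

noncomputable def RR (n m : ℕ) : RatFunc ℚ := (1 - q ^ n) * tt n * q *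
  ((∏ i ∈ range m, (1 - q ^ (4 * i + 4)) ^ 2) / ∏ i ∈ range (m + 1), (1 - q ^ (4 * i + 2)) ^ 2)

lemma partB {n m : ℕ} (hm : n = 4 * m + 3) (hz : IsPrimitiveRoot z n) :
    Dv (Polynomial.cyclotomic n ℚ ^ 5) (RR n m - SS q (q ^ n) (q ^ n) (2 * m + 1)) := by
  have qn : q ^ n ≠ 0 := pow_ne_zero _ q_ne
  have hodd : ∀ a b : ℕ, a ≠ b → 1 - (q ^ a)⁻¹ * q ^ b ≠ 0 := odd_ne q q_ne q_pow_ne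
  have s1 : SS q (q ^ n) (q ^ n) (2 * m + 1) = (1 - q ^ n) * tt n * q *
    ((∏ i ∈ range m, ((1 - q ^ n * q ^ (4 * i + 4)) * (1 - (q ^ n)⁻¹ * q ^ (4 * i + 4)))) /
      ∏ i ∈ range (m + 1), ((1 - q ^ n * q ^ (4 * i + 2)) * (1 - (q ^ n)⁻¹ * q ^ (4 * i + 2)))) := by
    have := SS_val q (q ^ n) q_ne qn q_pow_ne (fun i => by rw [← pow_add]; exact q_pow_ne _ (by omega))
      (fun i => hodd _ _ (by omega)) (2 * m + 1) m (by omega)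
    rw [← hm] at this
    rw [this, prod_div_distrib, prod_range_succ' _ m]
    have e : (1 - q ^ n * q ^ (4 * 0)) * (1 - (q ^ n)⁻¹ * q ^ (4 * 0)) = - tt n := by
      unfold tt
      field_simp
      ring
    rw [e]
    simp only [show ∀ i, 4 * (i + 1) = 4 * i + 4 by intro i; ring]
    ring
  have ht := ev_tt hz.pow_eq_one
  obtain ⟨l1, h1⟩ := DT.prod ht m _ _ _ (fun i _ => ⟨_, DT.base (z := z) (n := n) (4 * i + 4)⟩)
  obtain ⟨l2, h2⟩ := DT.prod ht (m+1) _ _ _ (fun i _ => ⟨_, DT.base (z := z) (n := n) (4 * i + 2)⟩)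
  have h3 := h1.div ht h2 (by
    refine prod_ne_zero_iff.2 fun i hi => pow_ne_zero _ ?_
    rw [mem_range] at hi
    rw [hm, show 4 * m + 3 = 2 * (2 * m + 1) + 1 by ring] at hz
    have := zeta_ne2 hz (2 * i + 1) (by omega) (by omega)
    convert this using 3
    ring)
  obtain ⟨-, d, h4, h5⟩ := h3
  rw [s1, h4]
  have := Dv.of_ev (by omega) hz 5 (((Ev.q z).mul ((ev_qinv hz.pow_eq_one).pow 2)).mul h5.neg)
  convert this using 1
  unfold RR tt
  ring

lemma ev_rho (i : ℕ) (h1 : 1 - z ^ (2 * i + 2) ≠ 0) (h2 : 1 - z ^ (4 * i + 4) ≠ 0) :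
    Ev z (rho q i) (rho z i) :=
  ((Ev.q z).neg.mul ((Ev.qp z _).div (Ev.qp z _) h2)).mul (((Ev.qp z _).div (Ev.qp z _) h1).pow 4)

lemma zeta_den {N : ℕ} (hz : IsPrimitiveRoot z (2 * N + 1)) (i : ℕ) (h : i + 1 < 2 * N + 1) :
    1 - z ^ (2 * i + 2) ≠ 0 ∧ 1 - z ^ (4 * i + 4) ≠ 0 := by
  have h1 := zeta_ne2 hz (i + 1) (by omega) h
  refine ⟨by rwa [show 2 * i + 2 = 2 * (i + 1) by ring], ?_⟩
  intro h2
  have := hz.dvd_of_pow_eq_one (4 * i + 4) (by linear_combination -h2)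
  rw [show 4 * i + 4 = 4 * (i + 1) by ring] at this
  have := Nat.Coprime.dvd_of_dvd_mul_left (Nat.Coprime.pow_right 2 (by simp) : Nat.Coprime (2 * N + 1) (2 ^ 2)) this
  exact absurd (Nat.le_of_dvd (by omega) this) (by omega)

lemma partC {n N : ℕ} (hn : n = 2 * N + 1) (hz : IsPrimitiveRoot z n) (k : ℕ) (h1 : N < k) (h2 : k < n) :
    Dv (Polynomial.cyclotomic n ℚ ^ 5) (FF k) := by
  obtain ⟨j, rfl⟩ : ∃ j, k = N + (1 + j) := ⟨k - N - 1, by omega⟩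
  have hz' := hz
  rw [hn] at hz'
  have er : ∀ i, i + 1 < 2 * N + 1 → Ev z (rho q i) (rho z i) := fun i hi =>
    ev_rho i (zeta_den hz' i hi).1 (zeta_den hz' i hi).2
  have e1 : EE q (N + (1 + j)) = EE q N * (rho q N * ∏ i ∈ range j, rho q (N + (1 + i))) := by
    unfold EE
    rw [prod_range_add, prod_range_add]
    simp
  have e2 : rho q N = (1 - q ^ n) ^ 5 * (-q * ((1 + q ^ n) * (1 - q ^ (4 * N + 4))⁻¹) * ((1 - q ^ (2 * N + 2)) ^ 4)⁻¹) := by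
    unfold rho
    rw [show 4 * N + 2 = n * 2 by omega, ← hn, pow_mul, div_pow]
    simp only [div_eq_mul_inv]
    ring
  have v1 := Ev.prod (z := z) (range N) (rho q) (rho z) (fun i hi => er i (by simp at hi; omega))
  have v2 := Ev.prod (z := z) (range j) (fun i => rho q (N + (1 + i))) (fun i => rho z (N + (1 + i)))
    (fun i hi => er _ (by simp at hi; omega))
  have zd := zeta_den hz' N (by omega)
  have v3 := ((Ev.q z).neg.mul (((Ev.one z).add ((Ev.q z).pow n)).mul ((Ev.qp z _).inv zd.2))).mul
    (((Ev.qp z _).pow 4).inv (pow_ne_zero 4 zd.1))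
  have := Dv.of_ev (by omega) hz 5 ((((Ev.qp z (4 * (N + (1 + j)) + 1)).mul v1).mul v2).mul v3)
  convert this using 1
  rw [FF, e1, e2, EE]
  ring

lemma Dv.zero (P : Polynomial ℚ) : Dv P 0 := ⟨0, 1, isCoprime_one_left, by simp⟩

lemma Dv.sum {P : Polynomial ℚ} (hP : ¬ IsUnit P) (s : Finset ℕ) (F : ℕ → RatFunc ℚ)
    (h : ∀ i ∈ s, Dv P (F i)) : Dv P (∑ i ∈ s, F i) := by
  classical
  induction s using Finset.induction_on with
  | empty => simpa using Dv.zero P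
  | insert a s ha ih =>
    rw [sum_insert ha]
    exact (h a (by simp)).add hP (ih fun i hi => h i (by simp [hi]))

lemma part5 {n m : ℕ} (hm : n = 4 * m + 3) (M : ℕ) (hM : M = 2 * m + 1 ∨ M = n - 1) :
    Dv (Polynomial.cyclotomic n ℚ ^ 5) (∑ k ∈ range (M + 1), FF k + RR n m) := by
  have hn0 : n ≠ 0 := by omega
  have hz := Complex.isPrimitiveRoot_exp n hn0
  have nu : ¬ IsUnit (Polynomial.cyclotomic n ℚ ^ 5) := by
    intro h
    exact (Polynomial.cyclotomic.irreducible_rat (by omega : 0 < n)).not_isUnit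
      (isUnit_pow_iff (by norm_num) |>.1 h)
  have h := (partA (N := 2 * m + 1) (by omega) hm hz).add nu (partB hm hz)
  have h2 : Dv (Polynomial.cyclotomic n ℚ ^ 5) (∑ k ∈ range (M - (2 * m + 1)), FF (2 * m + 1 + 1 + k)) := by
    refine Dv.sum nu _ _ fun k hk => ?_
    simp at hk
    exact partC (N := 2 * m + 1) (by omega) hz _ (by omega) (by omega)
  have h3 := h.add nu h2
  convert h3 using 1
  rw [show M + 1 = 2 * m + 1 + 1 + (M - (2 * m + 1)) by omega, sum_range_add]
  ring
end DTSec


section FSec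
variable {z : ℂ}

lemma prod_split (A B : ℕ → RatFunc ℚ) (h j : ℕ) :
    ∏ i ∈ range (h + j), A i / B i = (∏ i ∈ range j, A i / B (h + i)) * ∏ i ∈ range h, A (j + i) / B i := by
  simp only [prod_div_distrib]
  rw [prod_range_add B h j, add_comm h j, prod_range_add A j h]
  simp only [div_eq_mul_inv, mul_inv]
  ring

lemma ev_prod_ex (s : Finset ℕ) (F : ℕ → RatFunc ℚ) (h : ∀ i ∈ s, ∃ v, Ev z (F i) v) :
    ∃ v, Ev z (∏ i ∈ s, F i) v := by
  have : ∀ i, ∃ v, i ∈ s → Ev z (F i) v := by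
    intro i
    by_cases hi : i ∈ s
    · obtain ⟨v, hv⟩ := h i hi
      exact ⟨v, fun _ => hv⟩
    · exact ⟨0, fun h => absurd h hi⟩
  choose V hV using this
  exact ⟨_, Ev.prod s F V hV⟩

lemma ev_reg {h s : ℕ} (hs : 0 < s) (hz : IsPrimitiveRoot z (2 * h + 1))
    (hd : ∀ i < h, 1 - z ^ (s * (2 * i + 2)) ≠ 0) (K : ℕ) :
    ∃ v, Ev z (∏ i ∈ range K, (1 - q ^ (s * (2 * i + 1))) / (1 - q ^ (s * (2 * i + 2)))) v := by
  rcases le_or_gt K h with hK | hK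
  · refine ev_prod_ex _ _ fun i hi => ?_
    rw [mem_range] at hi
    exact ⟨_, (Ev.qp z _).div (Ev.qp z _) (hd i (by omega))⟩
  · obtain ⟨j, rfl⟩ := Nat.exists_eq_add_of_lt hK
    rw [add_assoc, prod_split (fun i => 1 - q ^ (s * (2 * i + 1))) (fun i => 1 - q ^ (s * (2 * i + 2)))]
    obtain ⟨v1, h1⟩ := ev_prod_ex (z := z) (range (j + 1))
      (fun i => (1 - q ^ (s * (2 * i + 1))) / (1 - q ^ (s * (2 * (h + i) + 2)))) (fun i _ => by
        refine ev_ratio hz _ _ (by positivity) fun hd => ?_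
        rw [show s * (2 * (h + i) + 2) = s * (2 * i + 1) + (2 * h + 1) * s by ring] at hd
        exact (Nat.dvd_add_left (Dvd.intro _ rfl)).1 hd)
    obtain ⟨v2, h2⟩ := ev_prod_ex (z := z) (range h)
      (fun i => (1 - q ^ (s * (2 * (j + 1 + i) + 1))) / (1 - q ^ (s * (2 * i + 2)))) (fun i hi => by
        rw [mem_range] at hi
        exact ⟨_, (Ev.qp z _).div (Ev.qp z _) (hd i (by omega))⟩)
    exact ⟨_, h1.mul h2⟩

lemma ev_EE {h : ℕ} (hz : IsPrimitiveRoot z (2 * h + 1)) (K : ℕ) : ∃ v, Ev z (EE q K) v := by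
  obtain ⟨v1, h1⟩ := ev_reg (s := 1) (by norm_num) hz (fun i hi => by
    rw [one_mul]; exact (zeta_den hz i (by omega)).1) K
  obtain ⟨v2, h2⟩ := ev_reg (s := 2) (by norm_num) hz (fun i hi => by
    have := (zeta_den hz i (by omega)).2
    rwa [show 2 * (2 * i + 2) = 4 * i + 4 by ring]) K
  have := ((Ev.q z).neg.pow K).mul (h2.mul (h1.pow 4))
  refine ⟨(-z) ^ K * (v2 * v1 ^ 4), ?_⟩
  · convert this using 1
    rw [← prod_pow, ← prod_mul_distrib]
    nth_rw 2 [← card_range K]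
    rw [← prod_const, ← prod_mul_distrib, EE]
    refine prod_congr rfl fun i _ => ?_
    rw [rho, show 2 * (2 * i + 1) = 4 * i + 2 by ring, show 2 * (2 * i + 2) = 4 * i + 4 by ring, one_mul, one_mul]
    ring

lemma pow_per {d : ℕ} (hz : IsPrimitiveRoot z d) (c e : ℕ) : z ^ (c * d + e) = z ^ e := by
  rw [pow_add, mul_comm c d, pow_mul, hz.pow_eq_one, one_pow, one_mul]

lemma rho_per {d : ℕ} (hz : IsPrimitiveRoot z d) (a i : ℕ) : rho z (a * d + i) = rho z i := by
  unfold rho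
  rw [show 4 * (a * d + i) + 2 = 4 * a * d + (4 * i + 2) by ring, show 4 * (a * d + i) + 4 = 4 * a * d + (4 * i + 4) by ring,
    show 2 * (a * d + i) + 2 = 2 * a * d + (2 * i + 2) by ring, show 2 * (a * d + i) + 1 = 2 * a * d + (2 * i + 1) by ring]
  simp only [pow_per hz]

lemma ev_FF {h : ℕ} (hz : IsPrimitiveRoot z (2 * h + 1)) (a : ℕ) : ∃ E, ∀ b < 2 * h + 1,
    Ev z (FF (a * (2 * h + 1) + b)) (E * ((1 - z ^ (4 * b + 1)) * EE z b)) := by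
  obtain ⟨E, hE⟩ := ev_EE hz (a * (2 * h + 1))
  refine ⟨E, fun b hb => ?_⟩
  have h1 : Ev z (∏ i ∈ range b, rho q (a * (2 * h + 1) + i)) (EE z b) := by
    refine Ev.prod _ _ _ fun i hi => ?_
    rw [mem_range] at hi
    have zd := zeta_den hz i (by omega)
    rw [← rho_per hz a i]
    refine ev_rho _ ?_ ?_
    · rw [show 2 * (a * (2 * h + 1) + i) + 2 = 2 * a * (2 * h + 1) + (2 * i + 2) by ring, pow_per hz]
      exact zd.1
    · rw [show 4 * (a * (2 * h + 1) + i) + 4 = 4 * a * (2 * h + 1) + (4 * i + 4) by ring, pow_per hz]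
      exact zd.2
  have h2 := (Ev.qp z (4 * (a * (2 * h + 1) + b) + 1)).mul (hE.mul h1)
  rw [show 4 * (a * (2 * h + 1) + b) + 1 = 4 * a * (2 * h + 1) + (4 * b + 1) by ring, pow_per hz] at h2
  have e : FF (a * (2 * h + 1) + b) = (1 - q ^ (4 * a * (2 * h + 1) + (4 * b + 1))) *
      (EE q (a * (2 * h + 1)) * ∏ i ∈ range b, rho q (a * (2 * h + 1) + i)) := by
    rw [FF, EE, EE, prod_range_add, show 4 * (a * (2 * h + 1) + b) + 1 = 4 * a * (2 * h + 1) + (4 * b + 1) by ring]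
  rw [e]
  exact h2.cast (by ring)

lemma EE_zero {h : ℕ} (hz : IsPrimitiveRoot z (2 * h + 1)) (b : ℕ) (hb : h < b) : EE z b = 0 := by
  unfold EE
  refine prod_eq_zero (mem_range.2 hb) ?_
  unfold rho
  rw [hz.pow_eq_one]
  simp

lemma block {h : ℕ} (hz : IsPrimitiveRoot z (2 * h + 1)) (a B : ℕ) (h1 : h + 1 ≤ B) (h2 : B ≤ 2 * h + 1) :
    Ev z (∑ b ∈ range B, FF (a * (2 * h + 1) + b)) 0 := by
  obtain ⟨E, hE⟩ := ev_FF hz a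
  have := Ev.sum (z := z) (range B) (fun b => FF (a * (2 * h + 1) + b)) _ (fun b hb => hE b (by simp at hb; omega))
  refine this.cast ?_
  rw [← mul_sum]
  obtain ⟨j, rfl⟩ := Nat.exists_eq_add_of_le h1
  rw [sum_range_add]
  have e1 := sum_anti hz (fun _ => 1) (fun _ _ => rfl)
  simp only [mul_one] at e1
  rw [e1, sum_eq_zero, zero_add, mul_zero]
  intro b _
  rw [EE_zero hz _ (by omega), mul_zero]

lemma blocks {h : ℕ} (hz : IsPrimitiveRoot z (2 * h + 1)) (a : ℕ) :
    Ev z (∑ b ∈ range (a * (2 * h + 1)), FF b) 0 := by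
  induction a with
  | zero => simpa using Ev.zero z
  | succ a ih =>
    rw [add_mul, one_mul, sum_range_add]
    exact (ih.add (block hz a _ (by omega) le_rfl)).cast (by simp)

lemma ev_sum0 {h c n M : ℕ} (hz : IsPrimitiveRoot z (2 * h + 1)) (hn : n = (2 * h + 1) * (2 * c + 1))
    (hM : 2 * M + 1 = n ∨ M + 1 = n) : Ev z (∑ k ∈ range (M + 1), FF k) 0 := by
  rcases hM with hM | hM
  · have : M + 1 = c * (2 * h + 1) + (h + 1) := by nlinarith
    rw [this, sum_range_add]
    exact ((blocks hz c).add (block hz c _ le_rfl (by omega))).cast (by simp)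
  · rw [hM, hn, mul_comm]
    exact blocks hz _

lemma ev_RR {h n m : ℕ} (hz : IsPrimitiveRoot z (2 * h + 1)) (hm : n = 4 * m + 3) (hn : 2 * h + 1 ∣ n) :
    Ev z (RR n m) 0 := by
  have zn : z ^ n = 1 := by
    obtain ⟨c, rfl⟩ := hn
    rw [pow_mul, hz.pow_eq_one, one_pow]
  have hden : ∀ i < h, 1 - z ^ (4 * i + 2) ≠ 0 := by
    intro i hi
    have := zeta_ne2 hz (2 * i + 1) (by omega) (by omega)
    rwa [show 4 * i + 2 = 2 * (2 * i + 1) by ring]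
  have key : ∃ v, Ev z ((1 - q ^ n) * ((∏ i ∈ range m, (1 - q ^ (4 * i + 4))) / ∏ i ∈ range (m + 1), (1 - q ^ (4 * i + 2)))) v := by
    rcases le_or_gt (m + 1) h with hh | hh
    · exact ⟨_, (Ev.qp z n).mul ((Ev.prod _ _ _ fun i _ => Ev.qp z _).div (Ev.prod _ _ _ fun i _ => Ev.qp z _)
        (prod_ne_zero_iff.2 fun i hi => hden i (by simp at hi; omega)))⟩
    · obtain ⟨j, rfl⟩ : ∃ j, m = j + h := ⟨m - h, by omega⟩
      obtain ⟨v1, h1⟩ := ev_ratio hz n (4 * h + 2) (by omega) (fun _ => hn)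
      obtain ⟨v2, h2⟩ := ev_prod_ex (z := z) (range j)
        (fun i => (1 - q ^ (4 * i + 4)) / (1 - q ^ (4 * (h + (1 + i)) + 2))) (fun i _ => by
        refine ev_ratio hz _ _ (by positivity) fun hd => ?_
        rw [show 4 * (h + (1 + i)) + 2 = 4 * i + 4 + (2 * h + 1) * 2 by ring] at hd
        exact (Nat.dvd_add_left (Dvd.intro _ rfl)).1 hd)
      obtain ⟨v3, h3⟩ := ev_prod_ex (z := z) (range h)
        (fun i => (1 - q ^ (4 * (j + i) + 4)) / (1 - q ^ (4 * i + 2))) (fun i hi => by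
          rw [mem_range] at hi
          exact ⟨_, (Ev.qp z _).div (Ev.qp z _) (hden i (by omega))⟩)
      refine ⟨v1 * (v2 * v3), ?_⟩
      · convert h1.mul (h2.mul h3) using 1
        rw [prod_range_add, show j + h + 1 = h + (1 + j) by ring, prod_range_add, prod_range_add]
        simp only [prod_div_distrib, prod_range_one, add_zero]
        simp only [div_eq_mul_inv, mul_inv]
        ring
  obtain ⟨v, hv⟩ := key
  have := (((Ev.qp z n).mul (Ev.q z)).mul (ev_qinv zn)).mul (hv.pow 2)
  rw [zn] at this
  have e : RR n m = (1 - q ^ n) * q * (q ^ n)⁻¹ * ((1 - q ^ n) * ((∏ i ∈ range m, (1 - q ^ (4 * i + 4))) /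
      ∏ i ∈ range (m + 1), (1 - q ^ (4 * i + 2)))) ^ 2 := by
    rw [RR, tt, prod_pow, prod_pow, mul_pow, div_pow]
    ring
  rw [e]
  exact this.cast (by simp)

lemma lhs_term (k : ℕ) : (-1 : RatFunc ℚ) ^ k * qint (4 * k + 1) *
          (qpoch q (q ^ 2) k ^ 4 * qpoch (q ^ 2) (q ^ 4) k /
            (qpoch (q ^ 2) (q ^ 2) k ^ 4 * qpoch (q ^ 4) (q ^ 4) k)) * q ^ k = FF k * (1 - q)⁻¹ := by
  have e : EE q k = (-1 : RatFunc ℚ) ^ k * q ^ k * (qpoch q (q ^ 2) k ^ 4 * qpoch (q ^ 2) (q ^ 4) k /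
            (qpoch (q ^ 2) (q ^ 2) k ^ 4 * qpoch (q ^ 4) (q ^ 4) k)) := by
    rw [← mul_pow, EE]
    nth_rw 2 [← card_range k]
    rw [← prod_const]
    unfold qpoch
    rw [← prod_pow, ← prod_pow, ← prod_mul_distrib, ← prod_mul_distrib, ← prod_div_distrib, ← prod_mul_distrib]
    refine prod_congr rfl fun i _ => ?_
    rw [rho, div_pow]
    rw [show 1 - q * (q ^ 2) ^ i = 1 - q ^ (2 * i + 1) by ring, show 1 - q ^ 2 * (q ^ 4) ^ i = 1 - q ^ (4 * i + 2) by ring,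
      show 1 - q ^ 2 * (q ^ 2) ^ i = 1 - q ^ (2 * i + 2) by ring, show 1 - q ^ 4 * (q ^ 4) ^ i = 1 - q ^ (4 * i + 4) by ring]
    generalize 1 - q ^ (2 * i + 1) = a
    generalize 1 - q ^ (4 * i + 2) = b
    generalize 1 - q ^ (2 * i + 2) = c
    generalize 1 - q ^ (4 * i + 4) = d
    simp only [div_eq_mul_inv, mul_inv]
    ring
  have e2 : qint (4 * k + 1) = (1 - q ^ (4 * k + 1)) * (1 - q)⁻¹ := by
    rw [qint, div_eq_mul_inv]
    norm_cast
  rw [FF, e, e2]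
  ring

lemma rhs_eq (n m : ℕ) (hm : n = 4 * m + 3) : (-(qint n ^ 3) * (q ^ (1 - (n : ℤ)) / (1 + q) ^ 2) *
        (qpoch (q ^ 4) (q ^ 4) m ^ 2 / qpoch (q ^ 6) (q ^ 4) m ^ 2)) = - (RR n m * (1 - q)⁻¹) := by
  have e1 : qpoch (q ^ 4) (q ^ 4) m = ∏ i ∈ range m, (1 - q ^ (4 * i + 4)) :=
    prod_congr rfl fun i _ => by ring
  have e2 : ∏ i ∈ range (m + 1), (1 - q ^ (4 * i + 2)) = qpoch (q ^ 6) (q ^ 4) m * ((1 - q) * (1 + q)) := by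
    rw [prod_range_succ']
    congr 1
    · exact prod_congr rfl fun i _ => by ring
    · ring
  have e3 : q ^ (1 - (n : ℤ)) = q * (q ^ n)⁻¹ := by
    rw [zpow_sub₀ q_ne, zpow_one, zpow_natCast, div_eq_mul_inv]
  have e4 : qint n = (1 - q ^ n) * (1 - q)⁻¹ := by
    rw [qint, div_eq_mul_inv, zpow_natCast]
  rw [RR, prod_pow, prod_pow, ← e1, e2, e3, e4, tt]
  generalize (qpoch (q ^ 6) (q ^ 4) m) = X
  generalize 1 - q ^ n = Y
  generalize 1 - q = Z
  generalize 1 + q = W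
  simp only [div_eq_mul_inv, mul_inv, mul_pow, ← inv_pow]
  ring
end FSec


theorem stmt17 (n : ℕ) (hpos : 0 < n) (hmod : n % 4 = 3) (M : ℕ)
    (hM : M = (n - 1) / 2 ∨ M = n - 1) :
    qcong
      (∑ k ∈ Finset.range (M + 1),
        (-1 : RatFunc ℚ) ^ k * qint (4 * k + 1) *
          (qpoch q (q ^ 2) k ^ 4 * qpoch (q ^ 2) (q ^ 4) k /
            (qpoch (q ^ 2) (q ^ 2) k ^ 4 * qpoch (q ^ 4) (q ^ 4) k)) * q ^ k)
      (-(qint n ^ 3) * (q ^ (1 - (n : ℤ)) / (1 + q) ^ 2) *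
        (qpoch (q ^ 4) (q ^ 4) ((n - 3) / 4) ^ 2 /
          qpoch (q ^ 6) (q ^ 4) ((n - 3) / 4) ^ 2))
      ((∑ i ∈ Finset.range n, Polynomial.X ^ i) * Polynomial.cyclotomic n ℚ ^ 4) := by
  obtain ⟨m, hm⟩ : ∃ m, n = 4 * m + 3 := ⟨n / 4, by omega⟩
  rw [show (n - 3) / 4 = m by omega, rhs_eq n m hm, sum_congr rfl fun k _ => lhs_term k, ← sum_mul]
  change Dv _ (_ - _)
  rw [sub_neg_eq_add, ← add_mul]
  have reg : ∀ d : ℕ, 1 < d → ∀ z : ℂ, IsPrimitiveRoot z d → Ev z (1 - q)⁻¹ (1 - z)⁻¹ := by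
    intro d hd z hz
    have := Ev.qp z 1
    rw [pow_one, pow_one] at this
    refine this.inv fun h => ?_
    have h1 : z = 1 := by linear_combination -h
    exact hz.ne_one hd h1
  refine Dv.combine (by omega) ?_ ?_
  · exact Dv.mul_ev hpos (Complex.isPrimitiveRoot_exp n hpos.ne') 5 (part5 hm M (by omega))
      (reg n (by omega) _ (Complex.isPrimitiveRoot_exp n hpos.ne'))
  · intro d hd h1 h2
    have hz := Complex.isPrimitiveRoot_exp d (by omega)
    obtain ⟨c', hc⟩ := hd
    have odd : Odd (d * c') := by rw [← hc]; exact ⟨2 * m + 1, by omega⟩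
    obtain ⟨⟨h, hh⟩, ⟨c, hc'⟩⟩ := Nat.odd_mul.1 odd
    have hz' := hz
    generalize Complex.exp (2 * Real.pi * Complex.I / d) = z at hz hz'
    rw [hh] at hz'
    have v1 := ev_sum0 (n := n) (M := M) (c := c) hz' (by rw [hc, hh, hc']) (by omega)
    have v2 := ev_RR hz' hm ⟨c', by rw [hc, hh]⟩
    have := Dv.of_ev0 (by omega) hz 0 (((v1.add v2).mul (reg d h1 z hz)).cast (by simp : _ = (0:ℂ)))
    simpa using this
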